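/- arXiv:2307.15211 — 4 statements merged into one kernel-verified Lean document; each statement's English description precedes it below -/
import Mathlib

section
/- (Classification of surfaces via caravans, chord-diagram form.) Every chord diagram σ of order n can be transformed by a finite sequence of slide moves and rotations (replacing a diagram τ by r ∘ τ ∘ r⁻¹) into the caravan C_{k,g}, where g = g(σ) is the genus of the one-vertex ribbon graph of σ and k = c(r ∘ σ) − 1 is one less than its number of boundary components; in particular k + 2g = n. -/
/-- Number of cycles (orbits, counting fixed points) of a self-map:
the number of connected components of its functional graph. For a permutation
this is the number of cycles, counting fixed points. -/
noncomputable def cycles {α : Type*} (f : α → α) : ℕ :=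
  Nat.card (Quot fun i j => f i = j)

-- `restrictTo σ A` agrees with `σ` on `A` and fixes everything else.
-- If `A` is the set of endpoints of a set of chords of `σ`, this is `σ_A`.
open Classical in
noncomputable def restrictTo {α : Type*} (f : α → α) (A : Set α) : α → α :=
  fun i => if i ∈ A then f i else i

/-- The rotation `i ↦ i + 1` of the `2n` points of a chord diagram. -/
def rot (n : ℕ) : ZMod (2 * n) → ZMod (2 * n) := fun i => i + 1

/-- Genus of the partial dual of the chord diagram `σ` relative to the set of
chords whose endpoint set is the (`σ`-invariant) set `A`. -/
noncomputable def pdGenus (n : ℕ) (σ : ZMod (2 * n) → ZMod (2 * n))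
    (A : Set (ZMod (2 * n))) : ℕ :=
  (n + 2 - cycles (rot n ∘ restrictTo σ A) - cycles (rot n ∘ restrictTo σ Aᶜ)) / 2

/-- Genus of the one-vertex ribbon graph of the chord diagram `σ`. -/
noncomputable def genus (n : ℕ) (σ : ZMod (2 * n) → ZMod (2 * n)) : ℕ :=
  (n + 1 - cycles (rot n ∘ σ)) / 2

/-- The partial-dual genus polynomial `∂Γ_σ(z) = Σ_A z^{g_A(σ)}`, the sum being
over all sets `A` of chords of `σ` (encoded as `σ`-invariant subsets of the
`2n` points). -/
noncomputable def pdPoly (n : ℕ) (σ : ZMod (2 * n) → ZMod (2 * n)) : Polynomial ℤ :=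
  if h : n = 0 then 1 else
    haveI : NeZero (2 * n) := ⟨by omega⟩
    ∑ A ∈ Finset.univ.filter (fun A : Finset (ZMod (2 * n)) => ∀ i ∈ A, σ i ∈ A),
      Polynomial.X ^ pdGenus n σ (↑A : Set (ZMod (2 * n)))

/-- `φ : ZMod (2n-1) → ZMod (2n)` is the cyclic-order-preserving identification of
the `2n-1` configuration points with the complement of the inserted point `x`:
it avoids `x` and each step advances by one position on the circle, skipping `x`. -/
def IsInsertion {m N : ℕ} (φ : ZMod m → ZMod N) (x : ZMod N) : Prop :=
  φ 0 ≠ x ∧ ∀ j, φ (j + 1) = if φ j + 1 = x then φ j + 2 else φ j + 1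

/-- A configuration of `2n-1` marked points on the circle: a distinguished chord
`c = {p, q}`, a distinguished unpaired point `u`, and a fixed-point-free pairing
of the remaining `2n-4` points into background chords; all encoded by the
involution `τ` whose unique fixed point is `u` and with `τ p = q`. -/
def IsConfig (n : ℕ) (τ : ZMod (2 * n - 1) → ZMod (2 * n - 1))
    (p q u : ZMod (2 * n - 1)) : Prop :=
  Function.Involutive τ ∧ τ p = q ∧ p ≠ q ∧ τ u = u ∧ ∀ j, τ j = j → j = u

/-- `D` is the chord diagram of order `n` obtained from the configuration `τ`
by inserting the extra point `x` (via the order-preserving identification `φ`)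
together with the new chord `c' = {x, u}`; all other chords are unchanged. -/
def IsInsertedDiagram (n : ℕ) (τ : ZMod (2 * n - 1) → ZMod (2 * n - 1))
    (u : ZMod (2 * n - 1)) (φ : ZMod (2 * n - 1) → ZMod (2 * n)) (x : ZMod (2 * n))
    (D : ZMod (2 * n) → ZMod (2 * n)) : Prop :=
  IsInsertion φ x ∧ (∀ j, j ≠ u → D (φ j) = φ (τ j)) ∧ D (φ u) = x ∧ D x = φ u

/-- The caravan `C_{k,g}` of `k` "one-humped camels" and `g` "two-humped camels":
the chord diagram of order `n = k + 2g` on `ZMod (2n)` whose chords are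
`{2i, 2i+1}` for `0 ≤ i < k` together with `{2k+4j, 2k+4j+2}` and
`{2k+4j+1, 2k+4j+3}` for `0 ≤ j < g`. -/
def caravan (n k g : ℕ) : ZMod (2 * n) → ZMod (2 * n) := fun a =>
  if a.val < 2 * k then (if a.val % 2 = 0 then a + 1 else a - 1)
  else if (a.val - 2 * k) % 4 < 2 then a + 2 else a - 2

/-- A slide move: `σ'` is obtained from `σ` by sliding a chord `e = {x, u}` along a
chord `c = {p, q}`, i.e. moving the endpoint `x` of `e` from the position immediately
preceding `p` to the position immediately following `q`. -/
def SlideMove (n : ℕ) (σ σ' : ZMod (2 * n) → ZMod (2 * n)) : Prop :=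
  ∃ (τ : ZMod (2 * n - 1) → ZMod (2 * n - 1)) (p q u : ZMod (2 * n - 1))
    (φ φ' : ZMod (2 * n - 1) → ZMod (2 * n)) (x x' : ZMod (2 * n)),
    IsConfig n τ p q u ∧
    IsInsertedDiagram n τ u φ x σ ∧ x + 1 = φ p ∧
    IsInsertedDiagram n τ u φ' x' σ' ∧ x' = φ' q + 1

/-- A rotation move: replacing the diagram `σ` by `r ∘ σ ∘ r⁻¹`. -/
def RotMove (n : ℕ) (σ σ' : ZMod (2 * n) → ZMod (2 * n)) : Prop :=
  ∀ i, σ' i = σ (i - 1) + 1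

/-! Read a chord diagram around the circle as a word in which every letter occurs twice, once for
each endpoint of the chord it labels. Sliding a letter in turn along the chords of a camel (an
isolated chord, or an isolated pair of crossing chords) carries it across the camel, so the rest of
the word can be normalized, even up to rotation, with a camel standing in front of it. A camel is
always available: take a chord spanning an arc that contains no other whole chord. Either its
endpoints are adjacent, or the next chord crosses it, and slides along these two chords push all
other endpoints out of the resulting pair. Induction on the length produces a caravan.

A slide only moves one point to another place along the boundary without emptying a component, so
the number of boundary components is invariant. As `C_{k,g}` has `k + 1` of them (the insides of the
one-humped camels and the outer component), it determines `k`, and then `g`. -/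

section Words

variable {α : Type*}

/-- The elementary moves on cyclic words, a chord diagram being read off as the word of the labels
of its successive points: `rotate` moves the base point, and `slide` moves an endpoint `a` from just
before one endpoint of the chord `c` to just after the other. -/
inductive WordMove : List α → List α → Prop
  | rotate (a : α) (l : List α) : WordMove (l ++ [a]) (a :: l)
  | slide {a c : α} (hac : a ≠ c) (A B : List α) :
      WordMove (a :: c :: A ++ c :: B) (c :: A ++ c :: a :: B)

/-- Equivalence of words under rotations and slides of an endpoint, in either direction. -/
def WordEquiv : List α → List α → Prop := Relation.EqvGen WordMove

local infix:50 " ∼ " => WordEquiv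

namespace WordEquiv

variable {w w' w'' : List α}

@[refl] theorem refl (w : List α) : w ∼ w := Relation.EqvGen.refl w

@[symm] theorem symm (h : w ∼ w') : w' ∼ w := Relation.EqvGen.symm _ _ h

@[trans] theorem trans (h : w ∼ w') (h' : w' ∼ w'') : w ∼ w'' := Relation.EqvGen.trans _ _ _ h h'

instance : Trans (WordEquiv (α := α)) (WordEquiv (α := α)) (WordEquiv (α := α)) := ⟨trans⟩

theorem perm (h : w ∼ w') : w.Perm w' := by
  classical
  induction h with
  | rel w w' h => cases h <;> exact List.perm_iff_count.2 fun x => by grind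
  | refl => exact .refl _
  | symm _ _ _ ih => exact ih.symm
  | trans _ _ _ _ _ ih ih' => exact ih.trans ih'

theorem append_comm (l₁ l₂ : List α) : l₁ ++ l₂ ∼ l₂ ++ l₁ := by
  induction l₂ generalizing l₁ with
  | nil => simpa using refl l₁
  | cons a l ih =>
    calc l₁ ++ a :: l
      _ ∼ l ++ l₁ ++ [a] := by simpa using ih (l₁ ++ [a])
      _ ∼ a :: l ++ l₁ := .rel _ _ (.rotate a (l ++ l₁))

theorem slide_append {c : α} {X : List α} (hX : c ∉ X) (A B : List α) :
    X ++ c :: A ++ c :: B ∼ c :: A ++ c :: X ++ B := by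
  induction X generalizing B with
  | nil => simpa using refl _
  | cons x X ih =>
    obtain ⟨hcx, hcX⟩ := not_or.1 (List.mem_cons.not.1 hX)
    calc x :: X ++ c :: A ++ c :: B
      _ ∼ X ++ c :: A ++ c :: (B ++ [x]) := by
        simpa using append_comm [x] (X ++ c :: A ++ c :: B)
      _ ∼ c :: A ++ c :: X ++ (B ++ [x]) := ih hcX _
      _ ∼ x :: c :: A ++ c :: (X ++ B) := by
        simpa using append_comm (c :: A ++ c :: X ++ B) [x]
      _ ∼ c :: A ++ c :: x :: (X ++ B) := .rel _ _ (.slide (Ne.symm hcx) A (X ++ B))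
      _ = c :: A ++ c :: (x :: X) ++ B := by simp

theorem slide_outside {c : α} {X : List α} (hX : c ∉ X) (P A B : List α) :
    P ++ X ++ c :: A ++ c :: B ∼ P ++ c :: A ++ c :: X ++ B :=
  calc P ++ X ++ c :: A ++ c :: B
    _ ∼ X ++ c :: A ++ c :: (B ++ P) := by
      simpa using append_comm P (X ++ c :: A ++ c :: B)
    _ ∼ c :: A ++ c :: X ++ (B ++ P) := slide_append hX A (B ++ P)
    _ ∼ P ++ c :: A ++ c :: X ++ B := by
      simpa using append_comm (c :: A ++ c :: X ++ B) P

theorem slide_inside {c : α} {X : List α} (hX : c ∉ X) (P A B : List α) :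
    P ++ c :: A ++ X ++ c :: B ∼ P ++ c :: X ++ A ++ c :: B :=
  calc P ++ c :: A ++ X ++ c :: B
    _ ∼ X ++ c :: (B ++ P) ++ c :: A := by
      simpa using append_comm (P ++ c :: A) (X ++ c :: B)
    _ ∼ c :: (B ++ P) ++ c :: X ++ A := slide_append hX (B ++ P) A
    _ ∼ P ++ c :: X ++ A ++ c :: B := by
      simpa using append_comm (c :: B) (P ++ c :: X ++ A)

end WordEquiv

/-- The word of a camel, one-humped (an isolated chord) or two-humped (a pair of crossing chords
isolated from all others). -/
inductive IsCamel : List α → Prop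
  | oneHumped (c : α) : IsCamel [c, c]
  | twoHumped {c d : α} (hcd : c ≠ d) : IsCamel [c, d, c, d]

namespace IsCamel

variable {b : List α}

theorem append_equiv_append (hb : IsCamel b) {X : List α} (hX : X.Disjoint b) (P S : List α) :
    P ++ X ++ b ++ S ∼ P ++ b ++ X ++ S := by
  cases hb with
  | oneHumped c => simpa using WordEquiv.slide_outside (c := c) (by grind [List.Disjoint]) P [] S
  | @twoHumped c d hcd =>
    have hc : c ∉ X := by grind [List.Disjoint]
    have hd : d ∉ X := by grind [List.Disjoint]
    calc P ++ X ++ [c, d, c, d] ++ S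
      _ ∼ P ++ [c, d, c] ++ X ++ [d] ++ S := by
        simpa using WordEquiv.slide_outside hc P [d] (d :: S)
      _ ∼ P ++ [c, d] ++ X ++ [c, d] ++ S := by
        simpa using WordEquiv.slide_inside hd (P ++ [c]) [c] S
      _ ∼ P ++ [c] ++ X ++ [d, c, d] ++ S := by
        simpa using WordEquiv.slide_inside hc P [d] (d :: S)
      _ ∼ P ++ [c, d, c, d] ++ X ++ S := by
        simpa using WordEquiv.slide_outside hd (P ++ [c]) [c] S

/-- A rotation of `w` can be performed inside `b ++ w`, since letters can be carried across the
camel `b`. -/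
theorem append_equiv_append_left (hb : IsCamel b) {w w' : List α} (h : w ∼ w')
    (hw : w.Disjoint b) : b ++ w ∼ b ++ w' := by
  induction h with
  | rel w w' h =>
    cases h with
    | rotate a l =>
      calc b ++ (l ++ [a])
        _ ∼ a :: b ++ l := by simpa using WordEquiv.append_comm (b ++ l) [a]
        _ ∼ b ++ a :: l := by
          simpa using hb.append_equiv_append (X := [a]) (by grind [List.Disjoint]) [] l
    | slide hac A B =>
      simpa using WordEquiv.slide_outside (List.mem_singleton.not.2 hac.symm) b A B
  | refl => exact .refl _
  | symm w w' h ih => exact (ih fun x hx => hw (WordEquiv.perm h |>.subset hx)).symm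
  | trans w w' w'' h _ ih ih' =>
    exact (ih hw).trans (ih' fun x hx => hw ((WordEquiv.perm h).symm.subset hx))

end IsCamel

/-- The word of the caravan whose one-humped camels are labelled by `ks` and whose two-humped camels
are labelled by the pairs in `gs`. -/
def caravanWord (ks : List α) (gs : List (α × α)) : List α :=
  ks.flatMap (fun c => [c, c]) ++ gs.flatMap (fun p => [p.1, p.2, p.1, p.2])

theorem IsCamel.append_caravanWord {b : List α} (hb : IsCamel b) {ks : List α} {gs : List (α × α)}
    (h : (caravanWord ks gs).Disjoint b) :
    ∃ ks' gs', b ++ caravanWord ks gs ∼ caravanWord ks' gs' := by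
  cases hb with
  | oneHumped c => exact ⟨c :: ks, gs, by simpa [caravanWord] using WordEquiv.refl _⟩
  | @twoHumped c d hcd =>
    refine ⟨ks, (c, d) :: gs, WordEquiv.symm ?_⟩
    simpa [caravanWord] using (IsCamel.twoHumped hcd).append_equiv_append
      (List.disjoint_of_disjoint_append_left_left h) [] (gs.flatMap fun p => [p.1, p.2, p.1, p.2])

variable [DecidableEq α]

/-- A double occurrence word, i.e. the word of a chord diagram: each letter is a chord and occurs at
its two endpoints. -/
def IsDoubleOccurrence (w : List α) : Prop := ∀ x ∈ w, w.count x = 2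

namespace IsDoubleOccurrence

variable {w w' b : List α}

theorem of_perm (h : IsDoubleOccurrence w) (hp : w.Perm w') : IsDoubleOccurrence w' :=
  fun x hx => hp.count_eq x ▸ h x (hp.mem_iff.2 hx)

theorem disjoint_of_append (hb : IsDoubleOccurrence b) (h : IsDoubleOccurrence (b ++ w)) :
    w.Disjoint b := by
  intro x hxw hxb
  have hcount := h x (List.mem_append_left w hxb)
  rw [List.count_append, hb x hxb] at hcount
  have := List.count_pos_iff.2 hxw
  omega

theorem of_append (hb : IsDoubleOccurrence b) (h : IsDoubleOccurrence (b ++ w)) :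
    IsDoubleOccurrence w := by
  intro x hx
  have hxb : x ∉ b := hb.disjoint_of_append h hx
  simpa [List.count_eq_zero_of_not_mem hxb] using h x (List.mem_append_right b hx)

end IsDoubleOccurrence

theorem IsCamel.isDoubleOccurrence {b : List α} (hb : IsCamel b) : IsDoubleOccurrence b := by
  intro x hx
  cases hb <;> grind

theorem WordEquiv.twoHumped_of_interlaced {c a : α} {A B S : List α}
    (h : IsDoubleOccurrence (c :: a :: A ++ c :: B ++ a :: S)) :
    c :: a :: A ++ c :: B ++ a :: S ∼ [c, a, c, a] ++ (S ++ B ++ A) := by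
  have hc := h c (by simp)
  have ha := h a (by simp)
  have haA : a ∉ A := by grind
  have hcBA : c ∉ B ++ A := by grind
  calc c :: a :: A ++ c :: B ++ a :: S
    _ ∼ [c] ++ a :: (c :: B) ++ A ++ a :: S := by
      simpa using (slide_inside haA [c] (c :: B) S).symm
    _ ∼ B ++ A ++ [c, a, c, a] ++ S := by
      simpa using (slide_append hcBA [a] (a :: S)).symm
    _ ∼ [c, a, c, a] ++ (S ++ B ++ A) := by
      simpa using append_comm (B ++ A) ([c, a, c, a] ++ S)

/-- If the chord `a` following `c` has both endpoints between those of `c`, it spans a shorter arc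
than `c`; otherwise it crosses `c`, and the two chords can be isolated. -/
theorem IsDoubleOccurrence.exists_isCamel_append {c : α} {A B : List α}
    (h : IsDoubleOccurrence (c :: A ++ c :: B)) :
    ∃ b w, IsCamel b ∧ c :: A ++ c :: B ∼ b ++ w := by
  match A with
  | [] => exact ⟨[c, c], B, .oneHumped c, .refl _⟩
  | a :: A =>
    have hcount_c := h c (by simp)
    have hcount_a := h a (by simp)
    have hca : c ≠ a := by grind
    by_cases haA : a ∈ A
    · obtain ⟨A₁, A₂, rfl⟩ := List.append_of_mem haA
      have hrotate : c :: a :: (A₁ ++ a :: A₂) ++ c :: B ∼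
          a :: A₁ ++ a :: (A₂ ++ c :: B ++ [c]) := by
        simpa using WordEquiv.append_comm [c] (a :: (A₁ ++ a :: A₂) ++ c :: B)
      obtain ⟨b, w, hb, hw⟩ := (h.of_perm hrotate.perm).exists_isCamel_append
      exact ⟨b, w, hb, hrotate.trans hw⟩
    · have haB : a ∈ B := by grind
      obtain ⟨B, S, rfl⟩ := List.append_of_mem haB
      refine ⟨[c, a, c, a], S ++ B ++ A, .twoHumped hca, ?_⟩
      simpa using WordEquiv.twoHumped_of_interlaced (by simpa using h)
termination_by A.length

theorem IsDoubleOccurrence.exists_isCamel_append_of_ne_nil {w : List α}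
    (h : IsDoubleOccurrence w) (hne : w ≠ []) : ∃ b w', IsCamel b ∧ w ∼ b ++ w' := by
  obtain ⟨c, l, rfl⟩ := List.exists_cons_of_ne_nil hne
  have hcount := h c (by simp)
  have hcl : c ∈ l := by grind
  obtain ⟨A, B, rfl⟩ := List.append_of_mem hcl
  exact h.exists_isCamel_append

theorem IsDoubleOccurrence.exists_equiv_caravanWord {w : List α} (h : IsDoubleOccurrence w) :
    ∃ ks gs, w ∼ caravanWord ks gs := by
  by_cases hne : w = []
  · exact ⟨[], [], by simpa [hne, caravanWord] using WordEquiv.refl _⟩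
  obtain ⟨b, w', hb, hw⟩ := h.exists_isCamel_append_of_ne_nil hne
  have hbw : IsDoubleOccurrence (b ++ w') := h.of_perm hw.perm
  have hdisj : w'.Disjoint b := hb.isDoubleOccurrence.disjoint_of_append hbw
  obtain ⟨ks, gs, hks⟩ := (hb.isDoubleOccurrence.of_append hbw).exists_equiv_caravanWord
  obtain ⟨ks', gs', hks'⟩ := hb.append_caravanWord fun x hx => hdisj (hks.perm.symm.subset hx)
  exact ⟨ks', gs', hw.trans ((hb.append_equiv_append_left hks hdisj).trans hks')⟩
termination_by w.length
decreasing_by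
  have := hw.perm.length_eq
  cases hb <;> grind

end Words

section Cycles

variable {α β : Type*}

/-- The cycle of `f` through `a`, as a member of the type counted by `cycles f`. -/
def toCycle (f : α → α) (a : α) : Quot fun i j => f i = j := Quot.mk _ a

theorem toCycle_apply (f : α → α) (a : α) : toCycle f (f a) = toCycle f a :=
  (Quot.sound (r := fun i j => f i = j) rfl).symm

theorem cycles_conj (e : α ≃ β) (f : α → α) : cycles (e.conj f) = cycles f :=
  (Nat.card_congr (Quot.congr e fun a b => by simp)).symm

/-- A system of representatives `s` for the fibres of an `f`-invariant map `F` is one for the cycles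
of `f` as soon as each point lies in the cycle of the representative of its fibre. -/
theorem cycles_eq_card_of_section {f : α → α} {F : α → β} {s : β → α} (hF : ∀ a, F (f a) = F a)
    (hFs : Function.RightInverse s F) (hsF : ∀ a, toCycle f (s (F a)) = toCycle f a) :
    cycles f = Nat.card β :=
  Nat.card_congr
    { toFun := Quot.lift F fun a b hab => hab ▸ (hF a).symm
      invFun := fun b => toCycle f (s b)
      left_inv := by rintro ⟨a⟩; exact hsF a
      right_inv := hFs }

variable [DecidableEq α]

theorem toCycle_update (f : α → α) (p a : α) :
    toCycle f (Function.update id p (f p) a) = toCycle f a := by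
  by_cases ha : a = p
  · simp [ha, toCycle_apply]
  · simp [ha]

/-- Deleting a point `p` that is not fixed from its cycle does not change the number of cycles, so
it suffices that `f` and `g` agree once `p` is bypassed. -/
theorem cycles_eq_of_bypass {f g : α → α} {p : α} (hf : f p ≠ p) (hg : g p ≠ p)
    (h : ∀ a ≠ p, Function.update id p (f p) (f a) = Function.update id p (g p) (g a)) :
    cycles f = cycles g := by
  have lift_eq {f g : α → α} (hf : f p ≠ p)
      (h : ∀ a ≠ p, Function.update id p (f p) (f a) = Function.update id p (g p) (g a)) (a : α) :
      toCycle g (Function.update id p (f p) (f a)) = toCycle g (Function.update id p (f p) a) := by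
    by_cases ha : a = p
    · simp [ha, hf]
    · rw [h a ha, toCycle_update, toCycle_apply, Function.update_of_ne ha, id]
  have left_inv {f g : α → α} (hf : f p ≠ p) (a : α) :
      toCycle f (Function.update id p (g p) (Function.update id p (f p) a)) = toCycle f a := by
    by_cases ha : a = p
    · simp [ha, hf, toCycle_apply]
    · simp [ha]
  exact Nat.card_congr
    { toFun := Quot.lift (fun a => toCycle g (Function.update id p (f p) a))
        fun a b hab => hab ▸ (lift_eq hf h a).symm
      invFun := Quot.lift (fun a => toCycle f (Function.update id p (g p) a))
        fun a b hab => hab ▸ (lift_eq hg (fun a ha => (h a ha).symm) a).symm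
      left_inv := by rintro ⟨a⟩; exact left_inv hf a
      right_inv := by rintro ⟨a⟩; exact left_inv hg a }

/-- The self-map of `Option α` obtained from `f` by inserting the new point `none` right after `a`
in its cycle. It adds a point to the cyclic order when `f` is the successor map, and a new chord
`{none, a}` when `f` is a pairing that leaves `a` fixed. -/
def insertAfter (f : α → α) (a : α) : Option α → Option α
  | none => some (f a)
  | some b => if b = a then none else some (f b)

/-- Only the position of `p = s j` along the boundary is affected: it is visited after `u` before
the slide, and just before the moved endpoint `none` after it. -/
theorem cycles_insertAfter_slide {s τ : α → α} (hs : Function.Injective s)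
    (hτ : Function.Injective τ) {u j : α} (hju : s j ≠ u) :
    cycles (insertAfter s j ∘ insertAfter τ u) =
      cycles (insertAfter s (τ (s j)) ∘ insertAfter τ u) := by
  have hτj : ∀ b, τ b = τ (s j) ↔ b = s j := fun b => hτ.eq_iff
  refine cycles_eq_of_bypass (p := some (s j)) ?_ ?_ ?_
  · grind [insertAfter]
  · grind [insertAfter]
  · rintro (_ | b) hb <;>
      grind [insertAfter, Function.update_apply]

end Cycles

/-- A chord diagram on an arbitrary set of points, the cyclic order being left aside. -/
structure IsChordDiagram {X : Type*} (σ : X → X) : Prop where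
  involutive : Function.Involutive σ
  ne_self : ∀ i, σ i ≠ i

theorem IsChordDiagram.conj {X Y : Type*} {σ : X → X} (hσ : IsChordDiagram σ) (e : X ≃ Y) :
    IsChordDiagram (e.conj σ) where
  involutive i := by simp [hσ.involutive _]
  ne_self i := by simpa [← e.symm.injective.ne_iff] using hσ.ne_self (e.symm i)

theorem IsChordDiagram.exists_eq_insertAfter {X : Type*} [DecidableEq X] {σ : Option X → Option X}
    (hσ : IsChordDiagram σ) :
    ∃ τ u, σ = insertAfter τ u ∧ Function.Involutive τ ∧ τ u = u ∧ ∀ j, τ j = j → j = u := by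
  obtain ⟨u, hu⟩ := Option.ne_none_iff_exists'.1 (hσ.ne_self none)
  have hσu : σ (some u) = none := by rw [← hu, hσ.involutive]
  have exists_some : ∀ j ≠ u, ∃ i, i ≠ u ∧ σ (some j) = some i := fun j hj => by
    cases h : σ (some j) with
    | none => exact absurd (by simpa [hu, hσ.involutive _] using congrArg σ h) hj
    | some i =>
      refine ⟨i, ?_, rfl⟩
      rintro rfl
      simpa [hσu, hσ.involutive _] using congrArg σ h
  refine ⟨fun j => (σ (some j)).getD u, u, ?_, ?_, by simp [hσu], ?_⟩
  · funext o
    rcases o with _ | j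
    · simp [insertAfter, hu, hσu]
    · by_cases hj : j = u
      · simp [insertAfter, hj, hσu]
      · obtain ⟨i, -, hi⟩ := exists_some j hj
        simp [insertAfter, hj, hi]
  · intro j
    by_cases hj : j = u
    · simp [hj, hσu]
    · obtain ⟨i, -, hi⟩ := exists_some j hj
      have : σ (some i) = some j := by rw [← hi, hσ.involutive]
      simp [hi, this]
  · intro j hj
    by_contra hju
    obtain ⟨i, -, hi⟩ := exists_some j hju
    simp only [hi, Option.getD_some] at hj
    exact hσ.ne_self (some j) (by rw [hi, hj])

section Insertion

variable {m N : ℕ} {φ : ZMod m → ZMod N} {x : ZMod N}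

theorem zmod_induction [NeZero N] {P : ZMod N → Prop} (x : ZMod N) (base : P x)
    (step : ∀ y, P y → P (y + 1)) (y : ZMod N) : P y := by
  have h : ∀ k : ℕ, P (x + k) := fun k => by
    induction k with
    | zero => simpa using base
    | succ k ih => simpa [add_assoc] using step _ ih
  simpa using h (y - x).val

theorem IsInsertion.exists_add_one_eq [NeZero N] (h : IsInsertion φ x) : ∃ j, φ j + 1 = x := by
  by_contra! hne
  have hφ : ∀ k : ℕ, φ k = φ 0 + k := fun k => by
    induction k with
    | zero => simp
    | succ k ih => rw [Nat.cast_succ, h.2, if_neg (hne _), ih, Nat.cast_succ, add_assoc]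
  exact hne (x - 1 - φ 0).val (by rw [hφ]; simp)

theorem IsInsertion.bijective [NeZero m] (h : IsInsertion φ x) (hN : N = m + 1) :
    Function.Bijective fun o : Option (ZMod m) => o.elim x φ := by
  have : NeZero N := ⟨by omega⟩
  refine (Fintype.bijective_iff_surjective_and_card _).2 ⟨?_, by simp [hN]⟩
  obtain ⟨j, hj⟩ := h.exists_add_one_eq
  refine zmod_induction x ⟨none, rfl⟩ ?_
  rintro _ ⟨_ | i, rfl⟩
  · exact ⟨some (j + 1), by simp [h.2, ← hj, add_assoc, one_add_one_eq_two]⟩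
  · by_cases hi : φ i + 1 = x
    · exact ⟨none, hi.symm⟩
    · exact ⟨some (i + 1), by simp [h.2, hi]⟩

variable [NeZero m]

/-- The identification of the points of a configuration, together with the new point `none`, with
the points of the chord diagram. -/
noncomputable def IsInsertion.equiv (h : IsInsertion φ x) (hN : N = m + 1) :
    Option (ZMod m) ≃ ZMod N :=
  Equiv.ofBijective _ (h.bijective hN)

@[simp] theorem IsInsertion.equiv_none (h : IsInsertion φ x) (hN : N = m + 1) :
    h.equiv hN none = x := rfl

@[simp] theorem IsInsertion.equiv_some (h : IsInsertion φ x) (hN : N = m + 1) (j : ZMod m) :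
    h.equiv hN (some j) = φ j := rfl

theorem IsInsertion.injective (h : IsInsertion φ x) (hN : N = m + 1) : Function.Injective φ :=
  (h.equiv hN).injective.comp (Option.some_injective _)

theorem IsInsertion.add_one_eq_conj (h : IsInsertion φ x) (hN : N = m + 1) {j : ZMod m}
    (hj : φ j + 1 = x) :
    (fun i => i + 1) = (h.equiv hN).conj (insertAfter (fun i => i + 1) j) := by
  have hsemi : ∀ o, h.equiv hN o + 1 = h.equiv hN (insertAfter (fun i => i + 1) j o) := by
    rintro (_ | i)
    · simp [insertAfter, h.2, ← hj, add_assoc, one_add_one_eq_two]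
    · by_cases hi : i = j
      · simp [insertAfter, hi, hj]
      · have hix : φ i + 1 ≠ x := fun hix =>
          hi (h.injective hN (add_right_cancel (hix.trans hj.symm)))
        simp [insertAfter, hi, h.2, hix]
  funext i
  simp [← hsemi]

/-- The order-preserving identification of `ZMod m` with the complement of `x` that keeps the base
point `0` first, the analogue of `Fin.succAbove`. -/
def skipPoint (x : ZMod N) (j : ZMod m) : ZMod N :=
  ((if j.val < x.val then j.val else j.val + 1 : ℕ) : ZMod N)

theorem val_skipPoint (hN : N = m + 1) (x : ZMod N) (j : ZMod m) :
    (skipPoint x j).val = if j.val < x.val then j.val else j.val + 1 := by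
  have := j.val_lt
  exact ZMod.val_cast_of_lt (by split_ifs <;> omega)

theorem zmod_val_add_one [NeZero N] (i : ZMod N) :
    (i + 1).val = if i.val + 1 = N then 0 else i.val + 1 := by
  have hi := i.val_lt
  rw [← ZMod.natCast_zmod_val i, ← Nat.cast_succ, ZMod.val_natCast, ZMod.natCast_zmod_val]
  split_ifs with h
  · simp [h]
  · exact Nat.mod_eq_of_lt (by omega)

theorem isInsertion_skipPoint (hN : N = m + 1) (x : ZMod N) :
    IsInsertion (skipPoint x : ZMod m → ZMod N) x := by
  have : NeZero N := ⟨by omega⟩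
  have hx := x.val_lt
  refine ⟨fun h => ?_, fun j => ?_⟩
  · have := congrArg ZMod.val h
    rw [val_skipPoint hN, ZMod.val_zero] at this
    split_ifs at this <;> omega
  · have hj := j.val_lt
    have add_two : skipPoint x j + 2 = skipPoint x j + 1 + 1 := by ring
    simp only [← (ZMod.val_injective N).eq_iff, add_two, apply_ite ZMod.val, zmod_val_add_one,
      val_skipPoint hN]
    split_ifs <;> omega

theorem getElem?_insertIdx_equiv {α : Type*} (hN : N = m + 1) {v : List α} (hv : v.length = m)
    (a : α) (x : ZMod N) (o : Option (ZMod m)) :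
    (v.insertIdx x.val a)[((isInsertion_skipPoint hN x).equiv hN o).val]? =
      o.elim (some a) fun j => v[j.val]? := by
  have : NeZero N := ⟨by omega⟩
  have hx := x.val_lt
  rcases o with _ | j
  · rw [IsInsertion.equiv_none, List.getElem?_insertIdx_self, if_pos (by omega), Option.elim_none]
  · simp only [IsInsertion.equiv_some, val_skipPoint hN, Option.elim_some]
    split_ifs with h
    · exact List.getElem?_insertIdx_of_lt h
    · exact List.getElem?_insertIdx_of_gt (by omega)

end Insertion

section Moves

variable {n : ℕ} {σ σ' : ZMod (2 * n) → ZMod (2 * n)}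

theorem isInsertedDiagram_iff_eq_conj [NeZero (2 * n - 1)] {τ : ZMod (2 * n - 1) → ZMod (2 * n - 1)}
    {u : ZMod (2 * n - 1)} {φ : ZMod (2 * n - 1) → ZMod (2 * n)} {x : ZMod (2 * n)}
    (hN : 2 * n = 2 * n - 1 + 1) (hu : τ u = u) (h : IsInsertion φ x) :
    IsInsertedDiagram n τ u φ x σ ↔ σ = (h.equiv hN).conj (insertAfter τ u) := by
  have eq_conj_iff : σ = (h.equiv hN).conj (insertAfter τ u) ↔
      ∀ o, σ (h.equiv hN o) = h.equiv hN (insertAfter τ u o) := by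
    rw [funext_iff, ← (h.equiv hN).forall_congr_right]
    simp
  simp only [eq_conj_iff, Option.forall, IsInsertedDiagram, h, true_and, IsInsertion.equiv_none,
    IsInsertion.equiv_some, insertAfter, hu]
  constructor
  · rintro ⟨hφ, hφu, hx⟩
    refine ⟨hx, fun j => ?_⟩
    by_cases hj : j = u
    · simp [hj, hφu]
    · simp [hj, hφ j hj]
  · rintro ⟨hx, hφ⟩
    exact ⟨fun j hj => by simpa [hj] using hφ j, by simpa using hφ u, hx⟩

theorem SlideMove.cycles_eq [NeZero n] (h : SlideMove n σ σ') :
    cycles (rot n ∘ σ') = cycles (rot n ∘ σ) := by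
  obtain ⟨τ, p, q, u, φ, φ', x, x', ⟨hτ, hpq, hne, hu, -⟩, hσ, hx, hσ', hx'⟩ := h
  have hn := NeZero.pos n
  have hN : 2 * n = 2 * n - 1 + 1 := by omega
  have : NeZero (2 * n - 1) := ⟨by omega⟩
  have hpu : p ≠ u := by rintro rfl; exact hne (hu.symm.trans hpq)
  have hφ := hσ.1
  have hφ' := hσ'.1
  obtain ⟨j, hj⟩ := hφ.exists_add_one_eq
  have hjp : j + 1 = p := hφ.injective hN (by
    rw [hφ.2, if_pos hj, ← hx, ← hj, add_assoc, one_add_one_eq_two])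
  rw [isInsertedDiagram_iff_eq_conj hN hu hφ] at hσ
  rw [isInsertedDiagram_iff_eq_conj hN hu hφ'] at hσ'
  have hrot : rot n = (hφ.equiv hN).conj (insertAfter (· + 1) j) := hφ.add_one_eq_conj hN hj
  have hrot' : rot n = (hφ'.equiv hN).conj (insertAfter (· + 1) q) :=
    hφ'.add_one_eq_conj hN hx'.symm
  have hslide : cycles (insertAfter (· + 1) j ∘ insertAfter τ u) =
      cycles (insertAfter (· + 1) q ∘ insertAfter τ u) := by
    have := cycles_insertAfter_slide (add_left_injective 1) hτ.injective (j := j) (hjp.symm ▸ hpu)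
    rwa [hjp, hpq] at this
  calc cycles (rot n ∘ σ')
    _ = cycles (insertAfter (· + 1) q ∘ insertAfter τ u) := by
      rw [hσ', hrot', ← Equiv.conj_comp, cycles_conj]
    _ = cycles (insertAfter (· + 1) j ∘ insertAfter τ u) :=
      hslide.symm
    _ = cycles (rot n ∘ σ) := by
      rw [hσ, hrot, ← Equiv.conj_comp, cycles_conj]

theorem rotMove_iff_eq_conj : RotMove n σ σ' ↔ σ' = (Equiv.addRight 1).conj σ := by
  simp [RotMove, funext_iff, sub_eq_add_neg]

theorem RotMove.cycles_eq (h : RotMove n σ σ') : cycles (rot n ∘ σ') = cycles (rot n ∘ σ) := by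
  have hrot : rot n = (Equiv.addRight 1).conj (rot n) := by
    funext i
    simp [rot]
  rw [rotMove_iff_eq_conj.1 h, hrot, ← Equiv.conj_comp, cycles_conj, ← hrot]

/-- The moves of the classification theorem: slides in either direction, and rotations. -/
def DiagramMove (n : ℕ) (σ σ' : ZMod (2 * n) → ZMod (2 * n)) : Prop :=
  SlideMove n σ σ' ∨ SlideMove n σ' σ ∨ RotMove n σ σ'

/-- Equivalence of chord diagrams under slides and rotations. -/
def DiagramEquiv (n : ℕ) : (ZMod (2 * n) → ZMod (2 * n)) → (ZMod (2 * n) → ZMod (2 * n)) → Prop :=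
  Relation.ReflTransGen (DiagramMove n)

theorem DiagramEquiv.cycles_eq [NeZero n] (h : DiagramEquiv n σ σ') :
    cycles (rot n ∘ σ') = cycles (rot n ∘ σ) := by
  induction h with
  | refl => rfl
  | tail _ h ih =>
    rcases h with h | h | h
    · exact h.cycles_eq.trans ih
    · exact h.cycles_eq.symm.trans ih
    · exact h.cycles_eq.trans ih

/-- The inverse of a rotation is a power of it. -/
theorem RotMove.symm_equiv [NeZero n] (h : RotMove n σ σ') : DiagramEquiv n σ' σ := by
  have rotate_equiv (k : ℕ) : DiagramEquiv n σ' fun i => σ' (i - k) + k := by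
    induction k with
    | zero => simpa [DiagramEquiv] using Relation.ReflTransGen.refl
    | succ k ih =>
      refine ih.tail (.inr (.inr fun i => ?_))
      rw [Nat.cast_succ, add_assoc, sub_sub, add_comm (1 : ZMod _)]
  have hn := NeZero.pos n
  have cast_eq : ((2 * n - 1 : ℕ) : ZMod (2 * n)) = -1 := by
    rw [Nat.cast_pred (by omega), ZMod.natCast_self, zero_sub]
  have hσ : σ = fun i => σ' (i - (2 * n - 1 : ℕ)) + (2 * n - 1 : ℕ) := by
    funext i
    simp [cast_eq, h (i + 1)]
  rw [hσ]
  exact rotate_equiv _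

theorem DiagramEquiv.symm [NeZero n] (h : DiagramEquiv n σ σ') : DiagramEquiv n σ' σ := by
  induction h with
  | refl => exact .refl
  | tail _ h ih =>
    rcases h with h | h | h
    · exact .head (.inr (.inl h)) ih
    · exact .head (.inl h) ih
    · exact Relation.ReflTransGen.trans h.symm_equiv ih

theorem IsChordDiagram.slideMove_conj [NeZero (2 * n - 1)] (hσ : IsChordDiagram σ)
    {φ φ' : ZMod (2 * n - 1) → ZMod (2 * n)} {x x' : ZMod (2 * n)} (h : IsInsertion φ x)
    (h' : IsInsertion φ' x') (hN : 2 * n = 2 * n - 1 + 1) {p q : ZMod (2 * n - 1)}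
    (hx : x + 1 = φ p) (hx' : x' = φ' q + 1) (hpq : σ (φ p) = φ q) :
    SlideMove n σ (((h.equiv hN).symm.trans (h'.equiv hN)).conj σ) := by
  obtain ⟨τ, u, hτu, hτ, hu, huniq⟩ := (hσ.conj (h.equiv hN).symm).exists_eq_insertAfter
  have hσ_eq : σ = (h.equiv hN).conj (insertAfter τ u) := by
    rw [← hτu]
    simp [← Equiv.conj_symm]
  have hsome : insertAfter τ u (some p) = some q := by
    rw [← hτu]
    simp [hpq, Equiv.symm_apply_eq]
  have hpu : p ≠ u := by
    rintro rfl
    simp [insertAfter] at hsome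
  have hτp : τ p = q := by simpa [insertAfter, hpu] using hsome
  have hpq_ne : p ≠ q := fun hpq => hpu (huniq p (hτp.trans hpq.symm))
  refine ⟨τ, p, q, u, φ, φ', x, x', ⟨hτ, hτp, hpq_ne, hu, huniq⟩,
    (isInsertedDiagram_iff_eq_conj hN hu h).2 hσ_eq, hx,
    (isInsertedDiagram_iff_eq_conj hN hu h').2 ?_, hx'⟩
  rw [← hτu]
  rfl

end Moves

section Representation

variable {α : Type*} {N n : ℕ}

/-- The word `w` of length `N` represents the chord diagram `σ` if equal letters mark exactly
the two endpoints of a chord. -/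
def Represents (w : List α) (σ : ZMod N → ZMod N) : Prop :=
  w.length = N ∧ ∀ i j, w[i.val]? = w[j.val]? ↔ j = i ∨ j = σ i

theorem Represents.conj {w w' : List α} {σ : ZMod N → ZMod N} (h : Represents w σ)
    (hlen : w'.length = w.length) {E : Equiv.Perm (ZMod N)}
    (hE : ∀ i, w'[(E i).val]? = w[i.val]?) : Represents w' (E.conj σ) := by
  refine ⟨hlen.trans h.1, fun i j => ?_⟩
  rw [← E.apply_symm_apply i, ← E.apply_symm_apply j, hE, hE, h.2]
  simp [Equiv.symm_apply_eq]

theorem WordMove.exists_perm_of_rotate [NeZero n] (a : α) {l : List α}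
    (hl : (l ++ [a]).length = 2 * n) :
    ∃ E : Equiv.Perm (ZMod (2 * n)), (∀ i, (a :: l)[(E i).val]? = (l ++ [a])[i.val]?) ∧
      ∀ σ, DiagramEquiv n σ (E.conj σ) := by
  refine ⟨Equiv.addRight 1, fun i => ?_, fun σ => .single (.inr (.inr (rotMove_iff_eq_conj.2 rfl)))⟩
  have hi := i.val_lt
  simp only [List.length_append, List.length_singleton] at hl
  rw [Equiv.coe_addRight, zmod_val_add_one]
  split_ifs with h
  · simp [show i.val = l.length by omega]
  · rw [List.getElem?_append_left (by omega), List.getElem?_cons_succ]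

theorem exists_perm_insertIdx [NeZero (2 * n - 1)] (hN : 2 * n = 2 * n - 1 + 1) {v : List α}
    (hv : v.length = 2 * n - 1) (a : α) {x x' : ZMod (2 * n)} {p q : ZMod (2 * n - 1)}
    (hx : x + 1 = skipPoint x p) (hx' : x' = skipPoint x' q + 1) (hpq : p ≠ q)
    (hvpq : v[p.val]? = v[q.val]?) :
    ∃ E : Equiv.Perm (ZMod (2 * n)),
      (∀ i, (v.insertIdx x'.val a)[(E i).val]? = (v.insertIdx x.val a)[i.val]?) ∧
        ∀ σ, IsChordDiagram σ → Represents (v.insertIdx x.val a) σ → SlideMove n σ (E.conj σ) := by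
  have h := isInsertion_skipPoint hN x
  have h' := isInsertion_skipPoint hN x'
  refine ⟨(h.equiv hN).symm.trans (h'.equiv hN), fun i => ?_,
    fun σ hσ hrep => hσ.slideMove_conj h h' hN hx hx' ?_⟩
  · obtain ⟨o, rfl⟩ := (h.equiv hN).surjective i
    rw [Equiv.trans_apply, Equiv.symm_apply_apply, getElem?_insertIdx_equiv hN hv,
      getElem?_insertIdx_equiv hN hv]
  · have letter_eq : (v.insertIdx x.val a)[(skipPoint x p : ZMod (2 * n)).val]? =
        (v.insertIdx x.val a)[(skipPoint x q : ZMod (2 * n)).val]? :=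
      (getElem?_insertIdx_equiv hN hv a x (some p)).trans
        (hvpq.trans (getElem?_insertIdx_equiv hN hv a x (some q)).symm)
    exact (((hrep.2 _ _).1 letter_eq).resolve_left fun hqp => hpq (h.injective hN hqp.symm)).symm

theorem insertIdx_length_append (l l' : List α) (a : α) :
    (l ++ l').insertIdx l.length a = l ++ a :: l' := by
  induction l <;> simp_all

theorem WordMove.exists_perm_of_slide [NeZero n] {a c : α} {A B : List α}
    (hw : (a :: c :: A ++ c :: B).length = 2 * n) :
    ∃ E : Equiv.Perm (ZMod (2 * n)),
      (∀ i, (c :: A ++ c :: a :: B)[(E i).val]? = (a :: c :: A ++ c :: B)[i.val]?) ∧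
        ∀ σ, IsChordDiagram σ → Represents (a :: c :: A ++ c :: B) σ →
          SlideMove n σ (E.conj σ) := by
  have hn := NeZero.pos n
  have hN : 2 * n = 2 * n - 1 + 1 := by omega
  have : NeZero (2 * n - 1) := ⟨by omega⟩
  have hv : (c :: A ++ c :: B).length = 2 * n - 1 := by
    rw [← hw]
    rfl
  have hA : A.length + 2 < 2 * n := by
    simp only [← hw, List.length_cons, List.length_append]
    omega
  have hx' : ((A.length + 2 : ℕ) : ZMod (2 * n)).val = A.length + 2 := ZMod.val_cast_of_lt hA
  have hq : ((A.length + 1 : ℕ) : ZMod (2 * n - 1)).val = A.length + 1 :=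
    ZMod.val_cast_of_lt (by omega)
  have hw' : (c :: A ++ c :: B).insertIdx (A.length + 2) a = c :: A ++ c :: a :: B := by
    simpa using insertIdx_length_append (c :: A ++ [c]) B a
  have hslide := exists_perm_insertIdx hN hv a (x := 0) (x' := (A.length + 2 : ℕ)) (p := 0)
    (q := (A.length + 1 : ℕ)) (by simp [skipPoint]) ?_ ?_ (by rw [hq]; simp)
  · rwa [hx', hw', ZMod.val_zero, List.insertIdx_zero] at hslide
  · rw [skipPoint, hx', hq, if_pos (by omega)]
    push_cast
    ring
  · intro h
    have := congrArg ZMod.val h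
    rw [hq, ZMod.val_zero] at this
    omega

theorem WordEquiv.exists_perm [NeZero n] {w w' : List α} (h : WordEquiv w w')
    (hw : w.length = 2 * n) :
    ∃ E : Equiv.Perm (ZMod (2 * n)), (∀ i, w'[(E i).val]? = w[i.val]?) ∧
      ∀ σ, IsChordDiagram σ → Represents w σ → DiagramEquiv n σ (E.conj σ) := by
  induction h with
  | rel w w' h =>
    cases h with
    | rotate a l =>
      obtain ⟨E, hE, hσ⟩ := WordMove.exists_perm_of_rotate a hw
      exact ⟨E, hE, fun σ _ _ => hσ σ⟩
    | slide _ A B =>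
      obtain ⟨E, hE, hσ⟩ := WordMove.exists_perm_of_slide hw
      exact ⟨E, hE, fun σ hchord hrep => .single (.inl (hσ σ hchord hrep))⟩
  | refl w => exact ⟨1, by simp, fun σ _ _ => .refl⟩
  | symm w w' h ih =>
    have hlen := (WordEquiv.perm h).length_eq
    obtain ⟨E, hE, hσ⟩ := ih (hlen.trans hw)
    have hE' : ∀ i, w[(E.symm i).val]? = w'[i.val]? := fun i => by
      rw [← hE, E.apply_symm_apply]
    refine ⟨E.symm, hE', fun σ hchord hrep => ?_⟩
    simpa [← Equiv.conj_symm] using (hσ _ (hchord.conj E.symm) (hrep.conj hlen hE')).symm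
  | trans w w' w'' h _ ih ih' =>
    have hlen := (WordEquiv.perm h).length_eq
    obtain ⟨E, hE, hσ⟩ := ih hw
    obtain ⟨E', hE', hσ'⟩ := ih' (hlen.symm.trans hw)
    refine ⟨E.trans E', fun i => (hE' _).trans (hE i), fun σ hchord hrep => ?_⟩
    exact Relation.ReflTransGen.trans (hσ σ hchord hrep)
      (hσ' _ (hchord.conj E) (hrep.conj hlen.symm hE))

theorem IsChordDiagram.exists_represents [NeZero N] {σ : ZMod N → ZMod N} (hσ : IsChordDiagram σ) :
    ∃ w : List (Sym2 (ZMod N)), Represents w σ ∧ IsDoubleOccurrence w := by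
  have chord_eq_iff (i j : ZMod N) : s(j, σ j) = s(i, σ i) ↔ j = i ∨ j = σ i := by
    rw [Sym2.eq_iff, hσ.involutive.injective.eq_iff, hσ.involutive.eq_iff, and_self, and_self]
  let points : List (ZMod N) := (List.range N).map Nat.cast
  have points_get (i : ZMod N) : points[i.val]? = some i := by simp [points, i.val_lt]
  have points_nodup : points.Nodup := List.nodup_range.map_on fun i hi j hj hij => by
    simpa [ZMod.val_cast_of_lt (List.mem_range.1 hi), ZMod.val_cast_of_lt (List.mem_range.1 hj)]
      using congrArg ZMod.val hij
  refine ⟨points.map fun i => s(i, σ i), ⟨by simp [points], fun i j => ?_⟩, fun c hc => ?_⟩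
  · simp [points_get, eq_comm (a := s(i, σ i)), chord_eq_iff]
  · obtain ⟨i, -, rfl⟩ := List.mem_map.1 hc
    have hfilter : (points.filter fun j => s(j, σ j) == s(i, σ i)).Perm [i, σ i] := by
      refine (List.perm_ext_iff_of_nodup (points_nodup.filter _) ?_).2 fun j => ?_
      · simpa using (hσ.ne_self i).symm
      · rw [List.mem_filter, beq_iff_eq, chord_eq_iff]
        simp [List.mem_of_getElem? (points_get j)]
    rw [List.count, List.countP_map, List.countP_eq_length_filter]
    exact hfilter.length_eq

end Representation

section Caravan

variable {n k g : ℕ}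

/-- The position paired with `i` in a caravan with `k` one-humped camels, positions being
represented by natural numbers instead of residues. -/
def caravanPartner (k i : ℕ) : ℕ :=
  if i < 2 * k then (if i % 2 = 0 then i + 1 else i - 1)
  else if (i - 2 * k) % 4 < 2 then i + 2 else i - 2

theorem caravanPartner_ne (k i : ℕ) : caravanPartner k i ≠ i := by
  unfold caravanPartner
  split_ifs <;> omega

theorem caravanPartner_lt (hn : k + 2 * g = n) {i : ℕ} (hi : i < 2 * n) :
    caravanPartner k i < 2 * n := by
  unfold caravanPartner
  split_ifs <;> omega

theorem caravanPartner_succ_add_two (k i : ℕ) :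
    caravanPartner (k + 1) (i + 2) = caravanPartner k i + 2 := by
  unfold caravanPartner
  split_ifs <;> omega

theorem caravanPartner_zero_add_four (i : ℕ) :
    caravanPartner 0 (i + 4) = caravanPartner 0 i + 4 := by
  unfold caravanPartner
  split_ifs <;> omega

theorem caravan_eq_cast [NeZero n] (k g : ℕ) (a : ZMod (2 * n)) :
    caravan n k g a = (caravanPartner k a.val : ℕ) := by
  obtain ⟨i, hi⟩ : ∃ i, a.val = i := ⟨_, rfl⟩
  have ha : a = (i : ZMod (2 * n)) := by rw [← hi, ZMod.natCast_zmod_val]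
  rw [caravan, caravanPartner, hi, ha]
  split_ifs
  · rw [Nat.cast_succ]
  · rw [Nat.cast_pred (by omega)]
  · rw [Nat.cast_add, Nat.cast_ofNat]
  · rw [Nat.cast_sub (by omega), Nat.cast_ofNat]

theorem val_caravan [NeZero n] (hn : k + 2 * g = n) (a : ZMod (2 * n)) :
    (caravan n k g a).val = caravanPartner k a.val := by
  rw [caravan_eq_cast, ZMod.val_cast_of_lt (caravanPartner_lt hn a.val_lt)]

theorem caravan_ne_self [NeZero n] (hn : k + 2 * g = n) (a : ZMod (2 * n)) :
    caravan n k g a ≠ a := fun ha =>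
  caravanPartner_ne k a.val (by rw [← val_caravan hn, ha])

theorem length_caravanWord {α : Type*} (ks : List α) (gs : List (α × α)) :
    (caravanWord ks gs).length = 2 * (ks.length + 2 * gs.length) := by
  simp only [caravanWord, List.length_append, List.length_flatMap, List.length_cons,
    List.length_nil, List.map_const', List.sum_replicate, smul_eq_mul]
  ring

theorem getElem?_caravanWord_caravanPartner {α : Type*} (ks : List α) (gs : List (α × α)) (i : ℕ) :
    (caravanWord ks gs)[caravanPartner ks.length i]? = (caravanWord ks gs)[i]? := by
  induction ks generalizing i with
  | nil =>
    induction gs generalizing i with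
    | nil => rfl
    | cons p gs ih =>
      match i with
      | 0 | 1 | 2 | 3 => rfl
      | i + 4 =>
        rw [List.length_nil, caravanPartner_zero_add_four]
        exact ih i
  | cons c ks ih =>
    match i with
    | 0 | 1 => simp [caravanPartner, caravanWord, show 1 < 2 * (ks.length + 1) by omega]
    | i + 2 =>
      rw [List.length_cons, caravanPartner_succ_add_two]
      exact ih i

theorem Represents.eq_caravan [NeZero n] {α : Type*} {ks : List α} {gs : List (α × α)}
    {σ : ZMod (2 * n) → ZMod (2 * n)} (h : Represents (caravanWord ks gs) σ) :
    ks.length + 2 * gs.length = n ∧ σ = caravan n ks.length gs.length := by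
  have hn : ks.length + 2 * gs.length = n := by
    simpa [length_caravanWord] using h.1
  refine ⟨hn, funext fun i => ?_⟩
  have letter_eq : (caravanWord ks gs)[i.val]? =
      (caravanWord ks gs)[(caravan n ks.length gs.length i).val]? := by
    rw [val_caravan hn, getElem?_caravanWord_caravanPartner]
  exact (((h.2 _ _).1 letter_eq).resolve_left (caravan_ne_self hn i)).symm

theorem toCycle_caravanPartner_add_one [NeZero n] {i : ℕ} (hi : i < 2 * n) :
    toCycle (rot n ∘ caravan n k g) ((caravanPartner k i + 1 : ℕ) : ZMod (2 * n)) =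
      toCycle (rot n ∘ caravan n k g) i := by
  rw [← toCycle_apply _ (i : ZMod (2 * n)), Function.comp_apply, caravan_eq_cast,
    ZMod.val_cast_of_lt hi, rot, Nat.cast_succ]

theorem toCycle_caravan_two_mul [NeZero n] (hn : k + 2 * g = n) {i : ℕ} (hi : i ≤ k) :
    toCycle (rot n ∘ caravan n k g) ((2 * i : ℕ) : ZMod (2 * n)) =
      toCycle (rot n ∘ caravan n k g) 0 := by
  induction i with
  | zero => simp
  | succ i ih =>
    have hpartner : caravanPartner k (2 * i) + 1 = 2 * (i + 1) := by grind [caravanPartner]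
    rw [← ih (by omega), ← hpartner, toCycle_caravanPartner_add_one (by omega)]

/-- The boundary component traverses the feet of a two-humped camel in the order `0, 3, 2, 1`. -/
theorem toCycle_caravan_twoHumped [NeZero n] (hn : k + 2 * g = n) {j r : ℕ} (hj : j < g)
    (hr : r ≤ 4) :
    toCycle (rot n ∘ caravan n k g) ((2 * k + 4 * j + r : ℕ) : ZMod (2 * n)) =
      toCycle (rot n ∘ caravan n k g) ((2 * k + 4 * j : ℕ) : ZMod (2 * n)) := by
  have step (a b : ℕ) (ha : a < 4) (hab : caravanPartner k (2 * k + 4 * j + a) + 1 =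
      2 * k + 4 * j + b) :
      toCycle (rot n ∘ caravan n k g) ((2 * k + 4 * j + b : ℕ) : ZMod (2 * n)) =
        toCycle (rot n ∘ caravan n k g) ((2 * k + 4 * j + a : ℕ) : ZMod (2 * n)) := by
    rw [← hab, toCycle_caravanPartner_add_one (by omega)]
  have h03 := step 0 3 (by omega) (by grind [caravanPartner])
  have h32 := step 3 2 (by omega) (by grind [caravanPartner])
  have h21 := step 2 1 (by omega) (by grind [caravanPartner])
  have h14 := step 1 4 (by omega) (by grind [caravanPartner])
  interval_cases r <;> simp_all

theorem toCycle_caravan_two_mul_add_four_mul [NeZero n] (hn : k + 2 * g = n) {j : ℕ} (hj : j ≤ g) :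
    toCycle (rot n ∘ caravan n k g) ((2 * k + 4 * j : ℕ) : ZMod (2 * n)) =
      toCycle (rot n ∘ caravan n k g) 0 := by
  induction j with
  | zero => exact toCycle_caravan_two_mul hn le_rfl
  | succ j ih => exact (toCycle_caravan_twoHumped hn hj le_rfl).trans (ih (by omega))

/-- The one-humped camel whose inner boundary component passes through the position `i`, or `none`
on the outer boundary component. -/
def innerComponent (k i : ℕ) : Option (Fin k) :=
  if h : i < 2 * k ∧ i % 2 = 1 then some ⟨i / 2, by omega⟩ else none

theorem toCycle_caravan_of_innerComponent_eq_none [NeZero n] (hn : k + 2 * g = n) {i : ℕ}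
    (hi : i < 2 * n) (h : innerComponent k i = none) :
    toCycle (rot n ∘ caravan n k g) (i : ZMod (2 * n)) = toCycle (rot n ∘ caravan n k g) 0 := by
  have hi_even : ¬(i < 2 * k ∧ i % 2 = 1) := by simpa [innerComponent] using h
  by_cases hik : i < 2 * k
  · obtain ⟨j, rfl⟩ : ∃ j, i = 2 * j := ⟨i / 2, by omega⟩
    exact toCycle_caravan_two_mul hn (by omega)
  · obtain ⟨j, r, hj, hr, rfl⟩ : ∃ j r, j < g ∧ r ≤ 4 ∧ i = 2 * k + 4 * j + r :=
      ⟨(i - 2 * k) / 4, (i - 2 * k) % 4, by omega, by omega, by omega⟩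
    exact (toCycle_caravan_twoHumped hn hj hr).trans
      (toCycle_caravan_two_mul_add_four_mul hn hj.le)

theorem innerComponent_eq_some_iff {i : ℕ} {j : Fin k} :
    innerComponent k i = some j ↔ i = 2 * j + 1 := by
  have := j.isLt
  simp only [innerComponent, Option.dite_none_right_eq_some, Option.some_inj, Fin.ext_iff]
  grind

theorem innerComponent_caravanPartner_add_one (k i : ℕ) :
    innerComponent k (caravanPartner k i + 1) = innerComponent k i := by
  ext j
  grind [innerComponent_eq_some_iff, caravanPartner]

theorem cycles_caravan [NeZero n] (hn : k + 2 * g = n) :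
    cycles (rot n ∘ caravan n k g) = k + 1 := by
  let s (o : Option (Fin k)) : ZMod (2 * n) := o.elim 0 fun i => ((2 * i + 1 : ℕ) : ZMod (2 * n))
  have hs (i : Fin k) : (s (some i)).val = 2 * i + 1 := ZMod.val_cast_of_lt (by omega)
  rw [cycles_eq_card_of_section (F := fun a => innerComponent k a.val) (s := s)]
  · simp
  · intro a
    rw [Function.comp_apply, rot, zmod_val_add_one, val_caravan hn]
    split_ifs with h
    · rw [← innerComponent_caravanPartner_add_one k a.val, h]
      simp [innerComponent]
    · exact innerComponent_caravanPartner_add_one k a.val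
  · rintro (_ | i)
    · simp [s, innerComponent]
    · exact innerComponent_eq_some_iff.2 (hs i)
  · intro a
    match h : innerComponent k a.val with
    | none => simpa [s] using (toCycle_caravan_of_innerComponent_eq_none hn a.val_lt h).symm
    | some i => rw [ZMod.val_injective _ ((hs i).trans (innerComponent_eq_some_iff.1 h).symm)]

end Caravan

/-- Classification of surfaces via caravans: every chord diagram `σ` of order `n` can be
transformed by a finite sequence of slide moves and rotations into the caravan `C_{k,g}`
with `g = g(σ)` and `k = c(r ∘ σ) - 1`; in particular `k + 2g = n`. -/
theorem chord_diagram_classification (n : ℕ) (hn : 0 < n)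
    (σ : ZMod (2 * n) → ZMod (2 * n))
    (hinv : Function.Involutive σ) (hfpf : ∀ i, σ i ≠ i) :
    Relation.ReflTransGen
      (fun a b => SlideMove n a b ∨ SlideMove n b a ∨ RotMove n a b)
      σ (caravan n (cycles (rot n ∘ σ) - 1) (genus n σ)) ∧
    (cycles (rot n ∘ σ) - 1) + 2 * genus n σ = n := by
  have : NeZero n := ⟨hn.ne'⟩
  have hσ : IsChordDiagram σ := ⟨hinv, hfpf⟩
  obtain ⟨w, hrep, hw⟩ := hσ.exists_represents
  obtain ⟨ks, gs, hequiv⟩ := hw.exists_equiv_caravanWord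
  obtain ⟨E, hE, hlift⟩ := hequiv.exists_perm hrep.1
  obtain ⟨hkg, hcaravan⟩ := (hrep.conj hequiv.perm.length_eq.symm hE).eq_caravan
  have hmoves : DiagramEquiv n σ (caravan n ks.length gs.length) := hcaravan ▸ hlift σ hσ hrep
  have hcycles : cycles (rot n ∘ σ) = ks.length + 1 :=
    hmoves.cycles_eq.symm.trans (cycles_caravan hkg)
  have hk : cycles (rot n ∘ σ) - 1 = ks.length := by omega
  have hg : genus n σ = gs.length := by rw [genus, hcycles]; omega
  rw [hk, hg]
  exact ⟨hmoves, hkg⟩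
end

section
/- For all k, g ≥ 0 with k + 2g = n, the caravan chord diagram C_{k,g} satisfies c(r ∘ C_{k,g}) = k + 1 and g(C_{k,g}) = g; that is, the one-vertex ribbon graph of the caravan consisting of k 'one-humped camels' and g 'two-humped camels' is a surface of genus g with k + 1 boundary components. -/
/-!
The face map `r ∘ C_{k,g}` fixes the second foot `2i + 1` of every one-humped camel and sends its
first foot `2i` to `2i + 2`, the first foot of the next camel. It traverses a two-humped camel with
feet `0, 1, 2, 3` as `0 → 3 → 2 → 1` and then enters the next camel. Hence the boundary components
are `k` fixed points together with one cycle visiting all other feet, and Euler's formula gives the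
genus.
-/

/-- The connected component of `a` in the functional graph of `f`; for a permutation `f`, the
cycle of `f` through `a`. It is the counterpart for points of the count `cycles`. -/
def cycleThrough {α : Type*} (f : α → α) (a : α) : Quot fun i j => f i = j :=
  Quot.mk _ a

section Cycles

variable {α β : Type*} {f : α → α}

theorem cycleThrough_apply (f : α → α) (a : α) : cycleThrough f (f a) = cycleThrough f a :=
  (Quot.sound (r := fun i j => f i = j) rfl).symm

theorem cycles_eq_card_of_section_s13 (φ : α → β) (s : β → α) (hφ : ∀ a, φ (f a) = φ a)
    (hs : ∀ b, φ (s b) = b) (hconn : ∀ a, cycleThrough f (s (φ a)) = cycleThrough f a) :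
    cycles f = Nat.card β :=
  Nat.card_congr
    { toFun := Quot.lift φ fun a _ h => h ▸ (hφ a).symm
      invFun := fun b => cycleThrough f (s b)
      left_inv := Quot.ind hconn
      right_inv := hs }

theorem cycles_eq_ncard_fixed_add_one {S : Set α} (hS : S.Finite) {a₀ : α} (ha₀ : a₀ ∉ S)
    (hfixed : ∀ a ∈ S, f a = a) (hcompl : ∀ a ∉ S, f a ∉ S)
    (hconn : ∀ a ∉ S, cycleThrough f a = cycleThrough f a₀) :
    cycles f = S.ncard + 1 := by
  classical
  have := hS.to_subtype
  let φ : α → Option S := fun a => if h : a ∈ S then some ⟨a, h⟩ else none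
  have φ_mem : ∀ a (h : a ∈ S), φ a = some ⟨a, h⟩ := fun a h => dif_pos h
  have φ_notMem : ∀ a ∉ S, φ a = none := fun a h => dif_neg h
  have hcard : cycles f = Nat.card (Option S) := by
    refine cycles_eq_card_of_section_s13 φ (fun o => o.elim a₀ Subtype.val) (fun a => ?_) ?_
      (fun a => ?_)
    · by_cases ha : a ∈ S
      · rw [hfixed a ha]
      · rw [φ_notMem a ha, φ_notMem _ (hcompl a ha)]
    · rintro (_ | ⟨a, ha⟩)
      · exact φ_notMem a₀ ha₀
      · exact φ_mem a ha
    · by_cases ha : a ∈ S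
      · rw [φ_mem a ha, Option.elim_some]
      · rw [φ_notMem a ha, Option.elim_none, hconn a ha]
  rw [hcard, Finite.card_option, Nat.card_coe_set_eq]

end Cycles

/-- The map `r ∘ C_{k,g}`, whose cycles are the boundary components of the caravan. -/
abbrev faceMap (n k g : ℕ) : ZMod (2 * n) → ZMod (2 * n) :=
  rot n ∘ caravan n k g

/-- The boundary component of the caravan `C_{k,g}` containing the point `a`, as a component of the
functional graph of `faceMap n k g`. -/
abbrev boundaryThrough (n k g : ℕ) (a : ZMod (2 * n)) : Quot fun i j => faceMap n k g i = j :=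
  cycleThrough (faceMap n k g) a

/-- The map `r ∘ C_{k,g}` on representatives `0 ≤ m < 2n`, before reduction modulo `2n`. -/
def faceStep (k m : ℕ) : ℕ :=
  if m < 2 * k then (if m % 2 = 0 then m + 2 else m)
  else if (m - 2 * k) % 4 < 2 then m + 3 else m - 1

/-- The endpoints `2i + 1`, for `i < k`, of the chords of the one-humped camels. -/
def secondFeet (n k : ℕ) : Set (ZMod (2 * n)) :=
  {a | a.val < 2 * k ∧ a.val % 2 = 1}

theorem exists_lt_natCast_eq {N : ℕ} (hN : 0 < N) (a : ZMod N) : ∃ m < N, (m : ZMod N) = a :=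
  haveI : NeZero N := ⟨hN.ne'⟩
  ⟨a.val, a.val_lt, ZMod.natCast_zmod_val a⟩

section Caravan

variable {n k g : ℕ}

theorem faceMap_natCast {m : ℕ} (hm : m < 2 * n) :
    faceMap n k g m = (faceStep k m : ℕ) := by
  simp only [faceMap, Function.comp_apply, rot, caravan, faceStep, ZMod.val_cast_of_lt hm]
  split_ifs
  · push_cast; ring
  · ring
  · push_cast; ring
  · have hpos : 1 ≤ m := by omega
    push_cast [Nat.cast_sub hpos]
    ring

theorem boundaryThrough_faceStep {m : ℕ} (hm : m < 2 * n) :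
    boundaryThrough n k g (faceStep k m : ℕ) = boundaryThrough n k g m := by
  rw [← faceMap_natCast hm]
  exact cycleThrough_apply (faceMap n k g) m

theorem faceMap_of_mem_secondFeet {a : ZMod (2 * n)} (ha : a ∈ secondFeet n k) :
    faceMap n k g a = a := by
  simp [faceMap, rot, caravan, ha.1, ha.2]

theorem zero_notMem_secondFeet : (0 : ZMod (2 * n)) ∉ secondFeet n k := by
  simp [secondFeet]

theorem natCast_mem_secondFeet {m : ℕ} (hm : m < 2 * n) :
    (m : ZMod (2 * n)) ∈ secondFeet n k ↔ m < 2 * k ∧ m % 2 = 1 := by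
  rw [secondFeet, Set.mem_ofPred_eq, ZMod.val_cast_of_lt hm]

theorem secondFeet_zero : secondFeet n 0 = ∅ := by
  simp [secondFeet]

theorem ncard_secondFeet (hk : k ≤ n) : (secondFeet n k).ncard = k := by
  refine Set.ncard_eq_of_bijective (fun i _ => ((2 * i + 1 : ℕ) : ZMod (2 * n))) ?_ ?_ ?_
  · intro a ha
    have hval : a.val < 2 * k := ha.1
    obtain ⟨m, hm, rfl⟩ := exists_lt_natCast_eq (by omega) a
    rw [natCast_mem_secondFeet hm] at ha
    exact ⟨m / 2, by omega, congrArg Nat.cast (by omega : 2 * (m / 2) + 1 = m)⟩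
  · intro i hi
    rw [natCast_mem_secondFeet (by omega)]
    omega
  · intro i j hi hj hij
    have hval := congrArg ZMod.val hij
    rw [ZMod.val_cast_of_lt (by omega), ZMod.val_cast_of_lt (by omega)] at hval
    omega

theorem finite_secondFeet (hk : k ≤ n) : (secondFeet n k).Finite := by
  obtain rfl | hpos := k.eq_zero_or_pos
  · rw [secondFeet_zero]
    exact Set.finite_empty
  · exact Set.finite_of_ncard_pos (by rwa [ncard_secondFeet hk])

theorem faceMap_notMem_secondFeet (hkg : k + 2 * g = n) {a : ZMod (2 * n)}
    (ha : a ∉ secondFeet n k) : faceMap n k g a ∉ secondFeet n k := by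
  obtain rfl | hk := k.eq_zero_or_pos
  · simp [secondFeet_zero]
  obtain ⟨m, hm, rfl⟩ := exists_lt_natCast_eq (by omega) a
  rw [natCast_mem_secondFeet hm] at ha
  rw [faceMap_natCast hm]
  have hstep : faceStep k m ≤ 2 * n ∧ ¬(faceStep k m < 2 * k ∧ faceStep k m % 2 = 1) := by
    unfold faceStep
    split_ifs <;> omega
  obtain hlt | heq := hstep.1.lt_or_eq
  · rw [natCast_mem_secondFeet hlt]
    exact hstep.2
  · rw [heq, ZMod.natCast_self]
    exact zero_notMem_secondFeet

theorem boundaryThrough_two_mul (hk : k ≤ n) {i : ℕ} (hi : i ≤ k) :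
    boundaryThrough n k g (2 * i : ℕ) = boundaryThrough n k g 0 := by
  induction i with
  | zero => rw [mul_zero, Nat.cast_zero]
  | succ i ih =>
    have hstep : faceStep k (2 * i) = 2 * (i + 1) := by unfold faceStep; split_ifs <;> omega
    rw [← hstep, boundaryThrough_faceStep (by omega), ih (by omega)]

theorem boundaryThrough_twoHumped (hkg : k + 2 * g = n) {j r : ℕ} (hj : j < g) (hr : r ≤ 4) :
    boundaryThrough n k g (2 * k + 4 * j + r : ℕ) =
      boundaryThrough n k g (2 * k + 4 * j : ℕ) := by
  have next : ∀ s t, s < 4 → faceStep k (2 * k + 4 * j + s) = 2 * k + 4 * j + t →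
      boundaryThrough n k g (2 * k + 4 * j + t : ℕ) =
        boundaryThrough n k g (2 * k + 4 * j + s : ℕ) := fun s t hs hst => by
    rw [← hst, boundaryThrough_faceStep (by omega)]
  have h03 := next 0 3 (by omega) (by unfold faceStep; split_ifs <;> omega)
  have h32 := next 3 2 (by omega) (by unfold faceStep; split_ifs <;> omega)
  have h21 := next 2 1 (by omega) (by unfold faceStep; split_ifs <;> omega)
  have h14 := next 1 4 (by omega) (by unfold faceStep; split_ifs <;> omega)
  interval_cases r
  · rfl
  · exact h21.trans (h32.trans h03)
  · exact h32.trans h03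
  · exact h03
  · exact h14.trans (h21.trans (h32.trans h03))

theorem boundaryThrough_twoHumped_start (hkg : k + 2 * g = n) {j : ℕ} (hj : j ≤ g) :
    boundaryThrough n k g (2 * k + 4 * j : ℕ) = boundaryThrough n k g 0 := by
  induction j with
  | zero => exact boundaryThrough_two_mul (by omega) le_rfl
  | succ j ih =>
    rw [mul_add_one, ← add_assoc, boundaryThrough_twoHumped hkg hj le_rfl, ih (by omega)]

theorem boundaryThrough_natCast (hkg : k + 2 * g = n) {m : ℕ} (hm : m < 2 * n)
    (hfoot : ¬(m < 2 * k ∧ m % 2 = 1)) :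
    boundaryThrough n k g m = boundaryThrough n k g 0 := by
  obtain hlt | hge := lt_or_ge m (2 * k)
  · obtain ⟨i, rfl⟩ : ∃ i, m = 2 * i := ⟨m / 2, by omega⟩
    exact boundaryThrough_two_mul (by omega) (by omega)
  · obtain ⟨j, r, hr, rfl⟩ : ∃ j r, r < 4 ∧ m = 2 * k + 4 * j + r :=
      ⟨(m - 2 * k) / 4, (m - 2 * k) % 4, by omega, by omega⟩
    rw [boundaryThrough_twoHumped hkg (by omega) hr.le,
      boundaryThrough_twoHumped_start hkg (by omega)]

end Caravan

section EmptyCaravan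

-- `ZMod 0` is `ℤ` and `ZMod.val` is `Int.natAbs` there, so for `n = 0` the caravan is not the empty
-- diagram but a self-map of `ℤ`, which has to be shown to be connected. It visits the block
-- `4q + {0, 1, 2, 3}` in the order `0 → 3 → 2 → 1` for `q ≥ 0` and `2 → 1 → 0 → 3` for `q < 0`, and
-- then enters block `q + 1`.

theorem boundaryThrough_empty_of_step_eq {a b : ℤ}
    (h : (if a.natAbs % 4 < 2 then a + 2 else a - 2) + 1 = b) :
    boundaryThrough 0 0 0 b = boundaryThrough 0 0 0 a := by
  rw [← h]
  exact cycleThrough_apply (faceMap 0 0 0) a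

theorem boundaryThrough_empty_block (q : ℤ) {r : ℤ} (h0 : 0 ≤ r) (h4 : r < 4) :
    boundaryThrough 0 0 0 (4 * q + r : ℤ) = boundaryThrough 0 0 0 (4 * q : ℤ) := by
  have h03 : boundaryThrough 0 0 0 (4 * q + 3 : ℤ) = boundaryThrough 0 0 0 (4 * q : ℤ) :=
    boundaryThrough_empty_of_step_eq (by split_ifs <;> omega)
  have h21 : boundaryThrough 0 0 0 (4 * q + 1 : ℤ) = boundaryThrough 0 0 0 (4 * q + 2 : ℤ) :=
    boundaryThrough_empty_of_step_eq (by split_ifs <;> omega)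
  have h2 : boundaryThrough 0 0 0 (4 * q + 2 : ℤ) = boundaryThrough 0 0 0 (4 * q : ℤ) := by
    obtain hq | hq := le_or_gt 0 q
    · exact (boundaryThrough_empty_of_step_eq (by split_ifs <;> omega)).trans h03
    · exact h21.symm.trans (boundaryThrough_empty_of_step_eq (by split_ifs <;> omega)).symm
  interval_cases r
  · rw [add_zero]
  · exact h21.trans h2
  · exact h2
  · exact h03

theorem boundaryThrough_empty_add_one (q : ℤ) :
    boundaryThrough 0 0 0 (4 * (q + 1) : ℤ) = boundaryThrough 0 0 0 (4 * q : ℤ) := by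
  obtain hq | hq := le_or_gt 0 q
  · calc boundaryThrough 0 0 0 (4 * (q + 1) : ℤ)
        = boundaryThrough 0 0 0 (4 * q + 1 : ℤ) :=
          boundaryThrough_empty_of_step_eq (by split_ifs <;> omega)
      _ = boundaryThrough 0 0 0 (4 * q : ℤ) :=
          boundaryThrough_empty_block q (by omega) (by omega)
  · calc boundaryThrough 0 0 0 (4 * (q + 1) : ℤ)
        = boundaryThrough 0 0 0 (4 * (q + 1) + 2 : ℤ) :=
          (boundaryThrough_empty_block (q + 1) (by omega) (by omega)).symm
      _ = boundaryThrough 0 0 0 (4 * q + 3 : ℤ) :=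
          boundaryThrough_empty_of_step_eq (by split_ifs <;> omega)
      _ = boundaryThrough 0 0 0 (4 * q : ℤ) :=
          boundaryThrough_empty_block q (by omega) (by omega)

theorem boundaryThrough_empty (a : ℤ) :
    boundaryThrough 0 0 0 a = boundaryThrough 0 0 0 (0 : ℤ) := by
  have start : ∀ q : ℤ, boundaryThrough 0 0 0 (4 * q : ℤ) = boundaryThrough 0 0 0 (0 : ℤ) := by
    intro q
    induction q with
    | zero => rfl
    | succ q ih => exact (boundaryThrough_empty_add_one q).trans ih
    | pred q ih =>
      rw [← boundaryThrough_empty_add_one, sub_add_cancel]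
      exact ih
  calc boundaryThrough 0 0 0 a
      = boundaryThrough 0 0 0 (4 * (a / 4) + a % 4 : ℤ) := by rw [Int.mul_ediv_add_emod]
    _ = boundaryThrough 0 0 0 (4 * (a / 4) : ℤ) :=
        boundaryThrough_empty_block _ (by omega) (by omega)
    _ = boundaryThrough 0 0 0 (0 : ℤ) := start _

end EmptyCaravan

theorem boundaryThrough_of_notMem_secondFeet {n k g : ℕ} (hkg : k + 2 * g = n) {a : ZMod (2 * n)}
    (ha : a ∉ secondFeet n k) :
    boundaryThrough n k g a = boundaryThrough n k g 0 := by
  obtain rfl | hn := n.eq_zero_or_pos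
  · obtain ⟨rfl, rfl⟩ : k = 0 ∧ g = 0 := by omega
    exact boundaryThrough_empty a
  · obtain ⟨m, hm, rfl⟩ := exists_lt_natCast_eq (by omega) a
    exact boundaryThrough_natCast hkg hm fun hfoot => ha ((natCast_mem_secondFeet hm).mpr hfoot)

/-- The one-vertex ribbon graph of the caravan `C_{k,g}` is a surface of genus `g`
with `k + 1` boundary components: `c(r ∘ C_{k,g}) = k + 1` and `g(C_{k,g}) = g`. -/
theorem caravan_boundary_and_genus (n k g : ℕ) (hkg : k + 2 * g = n) :
    cycles (rot n ∘ caravan n k g) = k + 1 ∧ genus n (caravan n k g) = g := by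
  have hcycles : cycles (rot n ∘ caravan n k g) = k + 1 := by
    rw [cycles_eq_ncard_fixed_add_one (finite_secondFeet (by omega)) zero_notMem_secondFeet
      (fun _ => faceMap_of_mem_secondFeet) (fun _ => faceMap_notMem_secondFeet hkg)
      (fun _ => boundaryThrough_of_notMem_secondFeet hkg), ncard_secondFeet (by omega)]
  refine ⟨hcycles, ?_⟩
  rw [genus, hcycles]
  omega
end

section
/- Let σ be the chord diagram of order 3 on ZMod 6 given by σ(i) = i + 3 (three pairwise interlaced chords {0,3}, {1,4}, {2,5}). Then ∂Γ_σ(z) = 8z; that is, every one of the 8 partial duals of σ has genus 1. -/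
/-!
Points on the same antipodal chord have the same image under `ZMod (2 * n) → ZMod n`, so this map
identifies the chords with `ZMod n`, and `r ∘ σ_A` descends to the `n`-cycle `x ↦ x + 1` there. Thus
`r ∘ σ_A` is a double cover of an `n`-cycle. Going once around the base advances a point by `n` and,
at each chord of `A`, by a further `n`; the monodromy is therefore `(#A + 1) * n`, and `r ∘ σ_A` has
one cycle if `#A` is even and two if `#A` is odd. When `n` is odd, exactly one of `#A` and `#Aᶜ` is
even, so every partial dual has genus `(n + 2 - 1 - 2) / 2`.
-/

theorem quotMk_eq_iff_exists_iterate_eq {α : Type*} (f : α → α) (i j : α) :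
    Quot.mk (fun i j => f i = j) i = Quot.mk _ j ↔ ∃ a b, f^[a] i = f^[b] j := by
  have mk_iterate (a : ℕ) (i : α) : Quot.mk (fun i j => f i = j) (f^[a] i) = Quot.mk _ i := by
    induction a with
    | zero => rfl
    | succ a ih =>
      rw [← ih, Function.iterate_succ_apply']
      exact (Quot.sound (r := fun i j => f i = j) rfl).symm
  refine ⟨fun h => ?_, fun ⟨a, b, h⟩ => by rw [← mk_iterate a i, h, mk_iterate]⟩
  replace h := Quot.eqvGen_exact h
  induction h with
  | rel _ _ hij => exact ⟨1, 0, hij⟩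
  | refl => exact ⟨0, 0, rfl⟩
  | symm _ _ _ ih =>
    obtain ⟨a, b, hab⟩ := ih
    exact ⟨b, a, hab.symm⟩
  | trans _ _ _ _ _ ihij ihjk =>
    obtain ⟨a, b, hab⟩ := ihij
    obtain ⟨c, d, hcd⟩ := ihjk
    refine ⟨c + a, b + d, ?_⟩
    rw [Function.iterate_add_apply, hab, Function.iterate_add_apply, ← hcd,
      (Function.Commute.iterate_iterate_self f c b).eq]

theorem card_filter_range_add_natCast_mem {n : ℕ} [NeZero n] (B : Finset (ZMod n)) (x : ZMod n) :
    ((Finset.range n).filter fun j : ℕ => x + (j : ZMod n) ∈ B).card = B.card := by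
  refine Finset.card_nbij' (fun j => x + (j : ZMod n)) (fun y => (y - x).val) ?_ ?_ ?_ ?_
  · intro j hj
    exact (Finset.mem_filter.1 hj).2
  · intro y hy
    simpa [ZMod.val_lt] using hy
  · intro j hj
    have hj_lt : j < n := Finset.mem_range.1 (Finset.mem_filter.1 hj).1
    simp [ZMod.val_cast_of_lt hj_lt]
  · intro y _
    simp

/-- The involution `i ↦ i + n` of the `2n` points: the chord diagram of order `n` whose chords are
pairwise interlaced. -/
def antipode (n : ℕ) (i : ZMod (2 * n)) : ZMod (2 * n) := i + n

/-- The antipodal chord through a point, the chord `{i, i + n}` being encoded as `i` modulo `n`. -/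
def chordOf (n : ℕ) : ZMod (2 * n) →+* ZMod n := ZMod.castHom (dvd_mul_left n 2) (ZMod n)

/-- The set of endpoints of a set of antipodal chords. -/
def endpoints {n : ℕ} [NeZero n] (B : Finset (ZMod n)) : Finset (ZMod (2 * n)) :=
  Finset.univ.filter fun i => chordOf n i ∈ B

/-- The permutation `r ∘ σ_B` of a set `B` of antipodal chords, whose cycles are the boundary
components of the ribbon subgraph of `B`. -/
noncomputable def boundaryMap {n : ℕ} [NeZero n] (B : Finset (ZMod n)) :
    ZMod (2 * n) → ZMod (2 * n) :=
  rot n ∘ restrictTo (antipode n) (endpoints B)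

section

variable {n : ℕ}

theorem natCast_add_self_eq_zero : (n + n : ZMod (2 * n)) = 0 := by
  rw [← Nat.cast_add, ← two_mul, ZMod.natCast_self]

theorem chordOf_surjective : Function.Surjective (chordOf n) :=
  ZMod.castHom_surjective _

theorem chordOf_natCast_self : chordOf n n = 0 := by
  rw [map_natCast, ZMod.natCast_self]

theorem chordOf_antipode (i : ZMod (2 * n)) : chordOf n (antipode n i) = chordOf n i := by
  rw [antipode, map_add, chordOf_natCast_self, add_zero]

variable [NeZero n]

theorem natCast_self_ne_zero : (n : ZMod (2 * n)) ≠ 0 := by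
  have hn : 0 < n := NeZero.pos n
  rw [Ne, ZMod.natCast_eq_zero_iff]
  exact Nat.not_dvd_of_pos_of_lt hn (by omega)

theorem chordOf_eq_zero_iff {i : ZMod (2 * n)} : chordOf n i = 0 ↔ i = 0 ∨ i = n := by
  refine ⟨fun h => ?_, ?_⟩
  · rw [← ZMod.natCast_zmod_val i, map_natCast, ZMod.natCast_eq_zero_iff] at h
    obtain ⟨q, hq⟩ := h
    have hq_lt : q < 2 := by
      have := ZMod.val_lt i
      rw [hq, mul_comm] at this
      exact lt_of_mul_lt_mul_right this n.zero_le
    rw [← ZMod.natCast_zmod_val i, hq]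
    interval_cases q <;> simp
  · rintro (rfl | rfl)
    exacts [map_zero _, chordOf_natCast_self]

theorem chordOf_eq_chordOf_iff {i j : ZMod (2 * n)} :
    chordOf n i = chordOf n j ↔ i = j ∨ i = antipode n j := by
  rw [← sub_eq_zero, ← map_sub, chordOf_eq_zero_iff, sub_eq_zero, sub_eq_iff_eq_add', antipode]

theorem mem_endpoints {B : Finset (ZMod n)} {i : ZMod (2 * n)} :
    i ∈ endpoints B ↔ chordOf n i ∈ B := by
  simp [endpoints]

theorem endpoints_injective : Function.Injective (endpoints (n := n)) := by
  intro B C h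
  ext x
  obtain ⟨i, rfl⟩ := chordOf_surjective x
  rw [← mem_endpoints, h, mem_endpoints]

theorem coe_endpoints_compl (B : Finset (ZMod n)) :
    ((endpoints Bᶜ : Finset (ZMod (2 * n))) : Set (ZMod (2 * n))) = (endpoints B : Set _)ᶜ := by
  ext i
  simp [mem_endpoints]

theorem forall_mem_antipode_mem_iff {A : Finset (ZMod (2 * n))} :
    (∀ i ∈ A, antipode n i ∈ A) ↔ ∃ B, endpoints B = A := by
  constructor
  · refine fun hA => ⟨A.image (chordOf n), ?_⟩
    ext i
    rw [mem_endpoints, Finset.mem_image]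
    refine ⟨?_, fun hi => ⟨i, hi, rfl⟩⟩
    rintro ⟨j, hj, hji⟩
    obtain rfl | rfl := chordOf_eq_chordOf_iff.1 hji.symm
    exacts [hj, hA j hj]
  · rintro ⟨B, rfl⟩ i hi
    rwa [mem_endpoints, chordOf_antipode, ← mem_endpoints]

theorem boundaryMap_apply (B : Finset (ZMod n)) (i : ZMod (2 * n)) :
    boundaryMap B i = i + 1 + if chordOf n i ∈ B then (n : ZMod (2 * n)) else 0 := by
  simp only [boundaryMap, Function.comp_apply, rot, restrictTo, Finset.mem_coe, mem_endpoints,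
    antipode]
  split_ifs <;> ring

theorem chordOf_boundaryMap (B : Finset (ZMod n)) (i : ZMod (2 * n)) :
    chordOf n (boundaryMap B i) = chordOf n i + 1 := by
  rw [boundaryMap_apply]
  split_ifs <;> simp

theorem chordOf_iterate_boundaryMap (B : Finset (ZMod n)) (m : ℕ) (i : ZMod (2 * n)) :
    chordOf n ((boundaryMap B)^[m] i) = chordOf n i + m := by
  induction m with
  | zero => simp
  | succ m ih =>
    rw [Function.iterate_succ_apply', chordOf_boundaryMap, ih, Nat.cast_succ, add_assoc]

theorem iterate_boundaryMap (B : Finset (ZMod n)) (m : ℕ) (i : ZMod (2 * n)) :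
    (boundaryMap B)^[m] i =
      i + m + ((Finset.range m).filter fun j : ℕ => chordOf n i + (j : ZMod n) ∈ B).card * n := by
  induction m with
  | zero => simp
  | succ m ih =>
    rw [Function.iterate_succ_apply', boundaryMap_apply, chordOf_iterate_boundaryMap, ih,
      Finset.range_add_one, Finset.filter_insert]
    split_ifs
    · rw [Finset.card_insert_of_notMem (by simp)]
      push_cast
      ring
    · push_cast
      ring

theorem iterate_boundaryMap_natCast_self (B : Finset (ZMod n)) (m : ℕ) :
    (boundaryMap B)^[m] n = (boundaryMap B)^[m] 0 + n := by
  rw [iterate_boundaryMap, iterate_boundaryMap, chordOf_natCast_self, map_zero]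
  ring

theorem iterate_self_boundaryMap (B : Finset (ZMod n)) (i : ZMod (2 * n)) :
    (boundaryMap B)^[n] i = i + (B.card + 1) * n := by
  rw [iterate_boundaryMap, card_filter_range_add_natCast_mem]
  ring

theorem iterate_self_boundaryMap_of_even {B : Finset (ZMod n)} (hB : Even B.card)
    (i : ZMod (2 * n)) : (boundaryMap B)^[n] i = i + n := by
  obtain ⟨k, hk⟩ := hB
  rw [iterate_self_boundaryMap, hk]
  push_cast
  linear_combination (k : ZMod (2 * n)) * natCast_add_self_eq_zero (n := n)

theorem iterate_self_boundaryMap_of_odd {B : Finset (ZMod n)} (hB : Odd B.card)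
    (i : ZMod (2 * n)) : (boundaryMap B)^[n] i = i := by
  obtain ⟨k, hk⟩ := hB
  rw [iterate_self_boundaryMap, hk]
  push_cast
  linear_combination (k + 1 : ZMod (2 * n)) * natCast_add_self_eq_zero (n := n)

theorem quotMk_boundaryMap_zero_eq_iff (B : Finset (ZMod n)) :
    Quot.mk (fun i j => boundaryMap B i = j) 0 = Quot.mk _ (n : ZMod (2 * n)) ↔ Even B.card := by
  rw [quotMk_eq_iff_exists_iterate_eq]
  constructor
  · rintro ⟨a, b, hab⟩
    by_contra hB
    have hper : Function.IsPeriodicPt (boundaryMap B) n 0 :=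
      iterate_self_boundaryMap_of_odd (Nat.not_even_iff_odd.1 hB) 0
    have hmod : a % n = b % n := by
      have := congrArg (chordOf n) hab
      rw [chordOf_iterate_boundaryMap, chordOf_iterate_boundaryMap, map_zero, chordOf_natCast_self,
        zero_add, zero_add] at this
      exact (ZMod.natCast_eq_natCast_iff' a b n).1 this
    rw [iterate_boundaryMap_natCast_self, ← hper.iterate_mod_apply a, hmod,
      hper.iterate_mod_apply, left_eq_add] at hab
    exact natCast_self_ne_zero hab
  · intro hB
    exact ⟨n, 0, by rw [iterate_self_boundaryMap_of_even hB, zero_add, Function.iterate_zero_apply]⟩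

theorem quotMk_boundaryMap_eq_or (B : Finset (ZMod n)) (q : Quot fun i j => boundaryMap B i = j) :
    q = Quot.mk _ 0 ∨ q = Quot.mk _ (n : ZMod (2 * n)) := by
  induction q using Quot.ind with
  | mk i =>
    have chordOf_eq_zero : chordOf n ((boundaryMap B)^[(-chordOf n i).val] i) = 0 := by
      rw [chordOf_iterate_boundaryMap, ZMod.natCast_zmod_val, add_neg_cancel]
    refine (chordOf_eq_zero_iff.1 chordOf_eq_zero).imp ?_ ?_ <;>
      exact fun h => (quotMk_eq_iff_exists_iterate_eq _ _ _).2 ⟨_, 0, h⟩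

theorem cycles_boundaryMap_of_even {B : Finset (ZMod n)} (hB : Even B.card) :
    cycles (boundaryMap B) = 1 := by
  refine Nat.card_eq_one_iff_exists.2 ⟨Quot.mk _ 0, fun q => ?_⟩
  obtain rfl | rfl := quotMk_boundaryMap_eq_or B q
  exacts [rfl, ((quotMk_boundaryMap_zero_eq_iff B).2 hB).symm]

theorem cycles_boundaryMap_of_odd {B : Finset (ZMod n)} (hB : Odd B.card) :
    cycles (boundaryMap B) = 2 := by
  refine Nat.card_eq_two_iff.2 ⟨Quot.mk _ 0, Quot.mk _ (n : ZMod (2 * n)), ?_, ?_⟩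
  · rwa [Ne, quotMk_boundaryMap_zero_eq_iff, Nat.not_even_iff_odd]
  · exact Set.eq_univ_of_forall (quotMk_boundaryMap_eq_or B)

theorem pdGenus_antipode_endpoints (B : Finset (ZMod n)) :
    pdGenus n (antipode n) (endpoints B) =
      (n + 2 - cycles (boundaryMap B) - cycles (boundaryMap Bᶜ)) / 2 := by
  rw [pdGenus, boundaryMap, boundaryMap, coe_endpoints_compl]

theorem pdGenus_antipode_endpoints_of_odd (hn : Odd n) (B : Finset (ZMod n)) :
    pdGenus n (antipode n) (endpoints B) = n / 2 := by
  have hcard : Odd (B.card + Bᶜ.card) := by rwa [Finset.card_add_card_compl, ZMod.card]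
  rw [pdGenus_antipode_endpoints]
  obtain hB | hB := Nat.even_or_odd B.card
  · have hBc : Odd Bᶜ.card := (Nat.odd_add'.1 hcard).2 hB
    rw [cycles_boundaryMap_of_even hB, cycles_boundaryMap_of_odd hBc]
    obtain ⟨m, rfl⟩ := hn
    omega
  · have hBc : Even Bᶜ.card := (Nat.odd_add.1 hcard).1 hB
    rw [cycles_boundaryMap_of_odd hB, cycles_boundaryMap_of_even hBc]
    obtain ⟨m, rfl⟩ := hn
    omega

open Polynomial in
theorem pdPoly_antipode_eq_sum :
    pdPoly n (antipode n) =
      ∑ B : Finset (ZMod n), (X : ℤ[X]) ^ pdGenus n (antipode n) (endpoints B) := by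
  rw [pdPoly, dif_neg (NeZero.ne n), ← Finset.sum_image (f := fun A : Finset (ZMod (2 * n)) =>
    (X : ℤ[X]) ^ pdGenus n (antipode n) A) endpoints_injective.injOn]
  refine Finset.sum_congr ?_ fun _ _ => rfl
  ext A
  simp only [Finset.mem_filter, Finset.mem_univ, true_and, Finset.mem_image,
    forall_mem_antipode_mem_iff]

end

open Polynomial in
theorem pdPoly_three_interlaced_general {n : ℕ} (hn : Odd n) (σ : ZMod (2 * n) → ZMod (2 * n))
    (hσ : ∀ i, σ i = i + n) : pdPoly n σ = 2 ^ n * X ^ (n / 2) := by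
  have : NeZero n := ⟨hn.pos.ne'⟩
  obtain rfl : σ = antipode n := funext hσ
  simp only [pdPoly_antipode_eq_sum, pdGenus_antipode_endpoints_of_odd hn, Finset.sum_const,
    Finset.card_univ, Fintype.card_finset, ZMod.card, nsmul_eq_mul, Nat.cast_pow, Nat.cast_ofNat]

open Polynomial in
/-- For the chord diagram of order 3 with three pairwise interlaced chords
`{0,3}, {1,4}, {2,5}`, the partial-dual genus polynomial is `8z`. -/
theorem pdPoly_three_interlaced (σ : ZMod 6 → ZMod 6) (hσ : ∀ i, σ i = i + 3) :
    pdPoly 3 σ = 8 * X :=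
  (pdPoly_three_interlaced_general (by decide : Odd 3) σ hσ).trans (by norm_num)
end

section
/- Let σ be the chord diagram of order 4 on ZMod 8 with chords {0,3}, {1,5}, {2,6}, {4,7} (interlace sequence (2,2,3,3): the chords {1,5} and {2,6} each interlace all three other chords, while {0,3} and {4,7} interlace only those two). Then ∂Γ_σ(z) = 12z + 4z². -/
/-!
The genus of a partial dual is the sum of the genera of the one-vertex ribbon graphs spanned by `A`
and by `Aᶜ`, and the genus of a set of chords is half the rank of its interlace matrix over `𝔽₂`,
which is alternating and so has even rank. Here `{0, 3}` and `{4, 7}` interlace the same chords, so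
the full matrix has rank `2`: a set of chords has genus `1` if two of its chords interlace and
genus `0` otherwise. Both `A` and `Aᶜ` contain interlacing chords exactly when `A` consists of one
of `{0, 3}`, `{4, 7}` and one of `{1, 5}`, `{2, 6}`; for the other twelve sets exactly one of the
two does. The proof replaces the rank formula by Euler's formula and a count of cycles for each of
the sixteen sets.
-/

open Finset Function

section Orbit

theorem quot_mk_iterate {α : Type*} (f : α → α) (k : ℕ) (x : α) :
    Quot.mk (fun i j ↦ f i = j) (f^[k] x) = Quot.mk _ x := by
  induction k with
  | zero => rfl
  | succ k ih =>
    rw [iterate_succ_apply']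
    exact (Quot.sound (r := fun i j ↦ f i = j) rfl).symm.trans ih

variable {α : Type*} [Fintype α] [DecidableEq α]

/-- The forward orbit of `x` under the self-map `f` of a finite type. It is cut off after
`card α` iterates, which loses no point, so that it is computable. -/
def forwardOrbit (f : α → α) (x : α) : Finset α :=
  (range (Fintype.card α)).image (f^[·] x)

theorem mem_forwardOrbit_iff {f : α → α} (hf : Injective f) {x y : α} :
    y ∈ forwardOrbit f x ↔ ∃ k, f^[k] x = y := by
  simp only [forwardOrbit, mem_image, mem_range]
  refine ⟨fun ⟨k, _, hk⟩ ↦ ⟨k, hk⟩, fun ⟨k, hk⟩ ↦ ⟨k % minimalPeriod f x, ?_, ?_⟩⟩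
  · exact (Nat.mod_lt k (minimalPeriod_pos_of_mem_periodicPts
      (hf.mem_periodicPts x))).trans_le minimalPeriod_le_card
  · rw [iterate_mod_minimalPeriod_eq, hk]

theorem forwardOrbit_apply {f : α → α} (hf : Injective f) (x : α) :
    forwardOrbit f (f x) = forwardOrbit f x := by
  ext y
  simp only [mem_forwardOrbit_iff hf, ← iterate_succ_apply]
  refine ⟨fun ⟨k, hk⟩ ↦ ⟨k + 1, hk⟩, ?_⟩
  rintro ⟨k, rfl⟩
  obtain ⟨p, hp, hper⟩ := hf.mem_periodicPts x
  refine ⟨k + (p - 1), ?_⟩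
  rw [Nat.succ_eq_add_one, show k + (p - 1) + 1 = k + p by omega, iterate_add_apply, hper.eq]

theorem cycles_eq_card_image_forwardOrbit {f : α → α} (hf : Injective f) :
    cycles f = #(univ.image (forwardOrbit f)) := by
  let orbitOf : (Quot fun i j ↦ f i = j) → Finset α :=
    Quot.lift (forwardOrbit f) fun x _ h ↦ h ▸ (forwardOrbit_apply hf x).symm
  have orbitOf_injective : Injective orbitOf := by
    rintro ⟨x⟩ ⟨y⟩ (h : forwardOrbit f x = forwardOrbit f y)
    obtain ⟨k, rfl⟩ : ∃ k, f^[k] x = y :=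
      (mem_forwardOrbit_iff hf).1 (h ▸ (mem_forwardOrbit_iff hf).2 ⟨0, rfl⟩)
    exact (quot_mk_iterate f k x).symm
  have range_orbitOf : Set.range orbitOf = univ.image (forwardOrbit f) := by
    rw [coe_image, coe_univ, Set.image_univ]
    exact Set.range_quot_lift _
  rw [cycles, ← Nat.card_range_of_injective orbitOf_injective, range_orbitOf,
    Nat.card_coe_set_eq, Set.ncard_coe_finset]

end Orbit

section RestrictTo

variable {α : Type*}

theorem restrictTo_coe [DecidableEq α] (f : α → α) (A : Finset α) :
    restrictTo f A = A.piecewise f id := by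
  ext i
  by_cases hi : i ∈ A <;> simp [restrictTo, hi]

theorem restrictTo_involutive {f : α → α} {A : Set α} (hf : Involutive f)
    (hA : ∀ i ∈ A, f i ∈ A) : Involutive (restrictTo f A) := by
  intro i
  by_cases hi : i ∈ A
  · simp [restrictTo, hi, hA i hi, hf i]
  · simp [restrictTo, hi]

end RestrictTo

section ChordSets

variable {n : ℕ}

/-- The chords of `σ` with endpoint set `A` span a one-vertex ribbon graph of genus `g`. This is
twice Euler's formula `1 - #A / 2 + c = 2 - 2 * g`, arranged to avoid division and subtraction. -/
def HasGenus (σ : ZMod (2 * n) → ZMod (2 * n)) (A : Finset (ZMod (2 * n))) (g : ℕ) : Prop :=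
  2 * cycles (rot n ∘ restrictTo σ A) + 4 * g = #A + 2

/-- `1` if two of the chords of `σ` with endpoint set `A` interlace, and `0` otherwise. The points
`i` and `j` are the first endpoints of the two chords in the order `0, 1, …, 2 * n - 1`. -/
def interlaceIndicator (σ : ZMod (2 * n) → ZMod (2 * n)) (A : Finset (ZMod (2 * n))) : ℕ :=
  if ∃ i ∈ A, ∃ j ∈ A, i.val < j.val ∧ j.val < (σ i).val ∧ (σ i).val < (σ j).val then 1 else 0

variable [NeZero n] {σ : ZMod (2 * n) → ZMod (2 * n)} {A : Finset (ZMod (2 * n))}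

/-- The sets of chords of `σ`, each encoded by its set of endpoints. -/
def chordSets (σ : ZMod (2 * n) → ZMod (2 * n)) : Finset (Finset (ZMod (2 * n))) :=
  univ.filter fun A ↦ ∀ i ∈ A, σ i ∈ A

theorem mem_chordSets : A ∈ chordSets σ ↔ ∀ i ∈ A, σ i ∈ A := by
  simp [chordSets]

theorem compl_mem_chordSets (hσ : Involutive σ) (hA : A ∈ chordSets σ) : Aᶜ ∈ chordSets σ := by
  simp only [mem_chordSets, mem_compl] at hA ⊢
  exact fun i hi h ↦ hi (hσ i ▸ hA _ h)

open Polynomial in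
theorem pdPoly_eq_sum_map_pdGenus (σ : ZMod (2 * n) → ZMod (2 * n)) :
    pdPoly n σ =
      (((chordSets σ).val.map fun A : Finset _ ↦ pdGenus n σ A).map (X ^ ·)).sum := by
  rw [Multiset.map_map]
  exact dif_neg (NeZero.ne n)

theorem HasGenus.pdGenus_eq_add {g g' : ℕ} (h : HasGenus σ A g) (h' : HasGenus σ Aᶜ g') :
    pdGenus n σ A = g + g' := by
  have card_add : #A + #Aᶜ = 2 * n := by rw [card_add_card_compl, ZMod.card]
  rw [HasGenus] at h h'
  rw [coe_compl] at h'
  rw [pdGenus]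
  omega

theorem hasGenus_iff {g : ℕ} (hσ : Involutive σ) (hA : A ∈ chordSets σ) :
    HasGenus σ A g ↔
      2 * #(univ.image (forwardOrbit (rot n ∘ A.piecewise σ id))) + 4 * g = #A + 2 := by
  have injective_rot : Injective (rot n) := add_left_injective 1
  have injective_restrictTo : Injective (restrictTo σ A) :=
    (restrictTo_involutive hσ (mem_chordSets.1 hA)).injective
  rw [HasGenus, cycles_eq_card_image_forwardOrbit (injective_rot.comp injective_restrictTo),
    restrictTo_coe]

end ChordSets

section Diagram2233

/-- The chord diagram with chords `{0, 3}`, `{1, 5}`, `{2, 6}`, `{4, 7}`. -/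
def diagram2233 : ZMod (2 * 4) → ZMod (2 * 4) :=
  ![3, 5, 6, 0, 7, 1, 2, 4]

theorem diagram2233_involutive : Involutive diagram2233 := by
  unfold Involutive
  decide

theorem hasGenus_interlaceIndicator_diagram2233 {A : Finset (ZMod (2 * 4))}
    (hA : A ∈ chordSets diagram2233) :
    HasGenus diagram2233 A (interlaceIndicator diagram2233 A) := by
  rw [hasGenus_iff diagram2233_involutive hA]
  revert A
  decide +kernel

theorem map_interlaceIndicator_add_compl_diagram2233 :
    (chordSets diagram2233).val.map
      (fun A ↦ interlaceIndicator diagram2233 A + interlaceIndicator diagram2233 Aᶜ) =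
      .replicate 12 1 + .replicate 4 2 := by
  decide +kernel

theorem pdGenus_diagram2233 {A : Finset (ZMod (2 * 4))} (hA : A ∈ chordSets diagram2233) :
    pdGenus 4 diagram2233 A =
      interlaceIndicator diagram2233 A + interlaceIndicator diagram2233 Aᶜ :=
  (hasGenus_interlaceIndicator_diagram2233 hA).pdGenus_eq_add
    (hasGenus_interlaceIndicator_diagram2233 (compl_mem_chordSets diagram2233_involutive hA))

theorem map_pdGenus_diagram2233 :
    (chordSets diagram2233).val.map (fun A : Finset _ ↦ pdGenus 4 diagram2233 A) =
      .replicate 12 1 + .replicate 4 2 :=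
  (Multiset.map_congr rfl fun _ hA ↦ pdGenus_diagram2233 hA).trans
    map_interlaceIndicator_add_compl_diagram2233

end Diagram2233

open Polynomial in
/-- For the chord diagram of order 4 with chords `{0,3}, {1,5}, {2,6}, {4,7}`
(interlace sequence `(2,2,3,3)`), the partial-dual genus polynomial is `12z + 4z²`. -/
theorem pdPoly_2233 (σ : ZMod 8 → ZMod 8)
    (h03 : σ 0 = 3) (h30 : σ 3 = 0) (h15 : σ 1 = 5) (h51 : σ 5 = 1)
    (h26 : σ 2 = 6) (h62 : σ 6 = 2) (h47 : σ 4 = 7) (h74 : σ 7 = 4) :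
    pdPoly 4 σ = 12 * X + 4 * X ^ 2 := by
  obtain rfl : σ = diagram2233 := by
    ext i
    fin_cases i <;> assumption
  rw [pdPoly_eq_sum_map_pdGenus, map_pdGenus_diagram2233]
  simp only [Multiset.map_add, Multiset.map_replicate, Multiset.sum_add, Multiset.sum_replicate,
    pow_one, nsmul_eq_mul, Nat.cast_ofNat]
end
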